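/- Let f : ℝ → ℝ be smooth, positive, with f(x) → 0 as |x| → ∞ and with bounded first and second derivatives. Let u : [0,T) × ℝ → ℝ be a classical solution of ∂u/∂t = ∂²u/∂x² − 2 f(x) u − u² with initial datum u(0,·) = h, with u(t,x) ≤ 0 everywhere and u(t,·) ∈ L^∞(ℝ) for each t ∈ [0,T). Let w : [0,∞) × ℝ → ℝ solve the linear equation ∂w/∂t = ∂²w/∂x² − 2 f(x) w with nonnegative initial datum w(0,·) = w₀ ≥ 0, w₀ ∈ L¹(ℝ), with the regularity and decay guaranteed by parabolic theory (w(t,·), ∂w/∂x(t,·) integrable and vanishing at ±∞, ‖w(s,·)‖_{L¹} > 0, locally uniform bounds in t). Then for every t ∈ (0,T): −∫ℝ w(t,x) h(x) dx ≤ ( ∫₀ᵗ 1/‖w(s,·)‖_{L¹(ℝ)} ds )⁻¹. -/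

import Mathlib

open MeasureTheory Filter
open scoped ENNReal NNReal

/-!
The function `y = -u ≥ 0` solves `y_t = y_xx - 2 f y + y²`, and the time reversal `m s = w (t - s)`
solves the adjoint of the linear part, so the pairing `Ψ s = ∫ m s * y s` formally satisfies
`Ψ' = ∫ m s * y s ^ 2 ≥ Ψ ^ 2 / ∫ m s` by Cauchy–Schwarz. A solution of this Riccati inequality that
is still finite at time `t` obeys `Ψ 0 * ∫₀ᵗ (∫ m s)⁻¹ ds ≤ 1`.

Two obstructions separate this from a proof. First, `y s` is bounded for each `s` only. It is
therefore replaced by `z = y / (1 + ε y)`, which is bounded by `ε⁻¹` and, since the map is concave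
and `f ≥ 0`, is still a supersolution; in the end `ε → 0`. Secondly, no joint regularity of `y` in
`(t, x)` is assumed, so one cannot differentiate under the integral sign. A one-sided difference
quotient bound `z r ≥ z s - C (r - s)`, locally uniform in space, is enough for a lower Dini
derivative of `Ψ`; it comes from comparison with explicit barriers, where a Baire category argument
makes up for the missing local boundedness of `y` and `z_t`.
-/

section

open Set
open scoped Topology

/-! ### Lower Dini derivatives -/

theorem eventually_lt_slope_integral {X : Type*} [MeasurableSpace X] {μ : Measure X}
    {H : ℝ → X → ℝ} {H' L G : X → ℝ} {s b c : ℝ} (hsb : s < b)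
    (hint : ∀ r ∈ Ico s b, Integrable (H r) μ)
    (hderiv : ∀ x, HasDerivAt (fun r => H r x) (H' x) s)
    (hL : Integrable L μ) (hLH' : ∀ x, L x ≤ H' x) (hG : Integrable G μ)
    (hlow : ∀ r ∈ Ioo s b, ∀ x, -((r - s) * G x) ≤ H r x - H s x)
    (hc : c < ∫ x, L x ∂μ) :
    ∀ᶠ r in 𝓝[>] s, c < slope (fun r => ∫ x, H r x ∂μ) s r := by
  have hev : ∀ᶠ r in 𝓝[>] s, r ∈ Ioo s b := Ioo_mem_nhdsGT hsb
  have hslope_int : ∀ r ∈ Ioo s b, Integrable (fun x => slope (fun r => H r x) s r) μ := by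
    intro r hr
    simp only [slope_def_field]
    exact ((hint r ⟨hr.1.le, hr.2⟩).sub (hint s ⟨le_rfl, hsb⟩)).div_const _
  have hlim : Tendsto (fun r => ∫ x, min (slope (fun r => H r x) s r) (L x) ∂μ) (𝓝[>] s)
      (𝓝 (∫ x, L x ∂μ)) := by
    refine tendsto_integral_filter_of_dominated_convergence (fun x => |G x| + |L x|) ?_ ?_
      (hG.abs.add hL.abs) (ae_of_all _ fun x => ?_)
    · filter_upwards [hev] with r hr
      exact ((hslope_int r hr).inf hL).aestronglyMeasurable
    · filter_upwards [hev] with r hr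
      refine ae_of_all _ fun x => ?_
      have hGx : -G x ≤ slope (fun r => H r x) s r := by
        rw [slope_def_field, le_div_iff₀ (sub_pos.2 hr.1)]
        linarith [hlow r hr x]
      refine abs_le.2 ⟨le_min ?_ ?_, (min_le_right _ _).trans ?_⟩ <;>
        linarith [neg_abs_le (L x), le_abs_self (L x), le_abs_self (G x), abs_nonneg (G x),
          abs_nonneg (L x)]
    · have hslope : Tendsto (slope (fun r => H r x) s) (𝓝[>] s) (𝓝 (H' x)) :=
        (hasDerivAt_iff_tendsto_slope.1 (hderiv x)).mono_left
          (nhdsWithin_mono s fun r (hr : s < r) => hr.ne')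
      simpa only [min_eq_right (hLH' x)] using hslope.min (tendsto_const_nhds (x := L x))
  filter_upwards [hev, hlim.eventually (lt_mem_nhds hc)] with r hr hcr
  calc c < ∫ x, min (slope (fun r => H r x) s r) (L x) ∂μ := hcr
    _ ≤ ∫ x, slope (fun r => H r x) s r ∂μ :=
        integral_mono ((hslope_int r hr).inf hL) (hslope_int r hr) fun x => min_le_left _ _
    _ = slope (fun r => ∫ x, H r x ∂μ) s r := by
        simp only [slope_def_field]
        rw [integral_div, integral_sub (hint r ⟨hr.1.le, hr.2⟩) (hint s ⟨le_rfl, hsb⟩)]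

theorem hasDerivAt_integral_of_continuousOn_Icc {k : ℝ → ℝ} {a b s : ℝ}
    (hk : ContinuousOn k (Icc a b)) (hs : s ∈ Ioo a b) :
    HasDerivAt (fun r => ∫ σ in a..r, k σ) (k s) s :=
  intervalIntegral.integral_hasDerivAt_right
    ((hk.mono (Icc_subset_Icc_right hs.2.le)).intervalIntegrable_of_Icc hs.1.le)
    ((hk.mono Ioo_subset_Icc_self).stronglyMeasurableAtFilter isOpen_Ioo s hs)
    (hk.continuousAt (Icc_mem_nhds hs.1 hs.2))

theorem continuousOn_integral_of_integrableOn_Icc {k : ℝ → ℝ} {a b : ℝ}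
    (hk : IntegrableOn k (Icc a b)) : ContinuousOn (fun r => ∫ σ in a..r, k σ) (Icc a b) := by
  rcases lt_or_ge b a with hba | hab
  · simp [hba]
  · rw [← uIcc_of_le hab] at hk ⊢
    exact intervalIntegral.continuousOn_primitive_interval hk

theorem add_integral_le_of_eventually_lt_slope {Φ k : ℝ → ℝ} {a b : ℝ} (hab : a ≤ b)
    (hΦ : ContinuousOn Φ (Icc a b)) (hk : ContinuousOn k (Icc a b))
    (hslope : ∀ s ∈ Ioo a b, ∀ c < k s, ∀ᶠ r in 𝓝[>] s, c < slope Φ s r) :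
    Φ a + ∫ s in a..b, k s ≤ Φ b := by
  rcases hab.eq_or_lt with rfl | hlt
  · simp
  let D : ℝ → ℝ := fun r => (∫ s in a..r, k s) - Φ r
  have hD : ContinuousOn D (Icc a b) :=
    (continuousOn_integral_of_integrableOn_Icc hk.integrableOn_Icc).sub hΦ
  have hmono : ∀ a' ∈ Ioo a b, D b ≤ D a' := by
    intro a' ha'
    refine image_le_of_liminf_slope_right_le_deriv_boundary (B := fun _ => D a') (B' := 0)
      (hD.mono (Icc_subset_Icc_left ha'.1.le)) le_rfl continuousOn_const
      (fun s _ => hasDerivWithinAt_const _ _ _) (fun s hs ε (hε : 0 < ε) => ?_)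
      (right_mem_Icc.2 ha'.2.le)
    have hs' : s ∈ Ioo a b := ⟨ha'.1.trans_le hs.1, hs.2⟩
    have hprim_slope := (hasDerivAt_iff_tendsto_slope.1
      (hasDerivAt_integral_of_continuousOn_Icc hk hs')).mono_left
      (nhdsWithin_mono s fun r (hr : s < r) => hr.ne')
    refine Eventually.frequently ?_
    filter_upwards [hslope s hs' (k s - ε / 2) (by linarith),
      hprim_slope.eventually (gt_mem_nhds (show k s < k s + ε / 2 by linarith))] with r hΦr hkr
    have : slope D s r = slope (fun r => ∫ σ in a..r, k σ) s r - slope Φ s r := by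
      simp only [slope_def_field, D]
      ring
    linarith
  have hD_le : D b ≤ D a := by
    have hright : Tendsto D (𝓝[>] a) (𝓝 (D a)) :=
      (hD a (left_mem_Icc.2 hab)).mono_left (nhdsWithin_le_of_mem (Icc_mem_nhdsGT hlt))
    refine ge_of_tendsto hright ?_
    filter_upwards [Ioo_mem_nhdsGT hlt] with a' ha' using hmono a' ha'
  simp only [D, intervalIntegral.integral_same] at hD_le
  linarith

/-! ### The maximum principle with one-sided time increments -/

theorem hasDerivAt_max_zero_pow (n : ℕ) (x : ℝ) :
    HasDerivAt (fun r : ℝ => max r 0 ^ (n + 2)) ((n + 2) * max x 0 ^ (n + 1)) x := by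
  rcases lt_trichotomy x 0 with hx | rfl | hx
  · rw [max_eq_right hx.le, zero_pow n.succ_ne_zero, mul_zero]
    refine (hasDerivAt_const x (0 : ℝ)).congr_of_eventuallyEq ?_
    filter_upwards [Iio_mem_nhds hx] with r (hr : r < 0)
    rw [max_eq_right hr.le, zero_pow (n + 1).succ_ne_zero]
  · rw [hasDerivAt_iff_isLittleO_nhds_zero]
    have hle : (fun r : ℝ => max r 0 ^ (n + 2)) =O[𝓝 0] fun r => r ^ (n + 2) := by
      refine Asymptotics.IsBigO.of_bound 1 (Eventually.of_forall fun r => ?_)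
      rw [one_mul, norm_pow, norm_pow]
      gcongr
      rcases le_total r 0 with hr | hr <;> simp [hr]
    simpa using hle.trans_isLittleO (Asymptotics.isLittleO_pow_id (by lia))
  · rw [max_eq_left hx.le]
    refine (by simpa using hasDerivAt_pow (n + 2) x :
      HasDerivAt (fun r : ℝ => r ^ (n + 2)) _ x).congr_of_eventuallyEq ?_
    filter_upwards [Ioi_mem_nhds hx] with r (hr : 0 < r)
    rw [max_eq_left hr.le]

theorem integrable_max_zero_pow_mul {v g : ℝ → ℝ} (hv : Continuous v) (hg : Continuous g)
    (hsupp : HasCompactSupport fun x => max (v x) 0) (n : ℕ) :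
    Integrable fun x => max (v x) 0 ^ (n + 1) * g x :=
  (((hv.max continuous_const).pow _).mul hg).integrable_of_hasCompactSupport
    ((hsupp.comp_left (g := fun r : ℝ => r ^ (n + 1)) (zero_pow n.succ_ne_zero)).mul_right)

theorem integral_max_zero_pow_mul_deriv_deriv_nonpos (n : ℕ) {v : ℝ → ℝ} (hv : ContDiff ℝ 2 v)
    (hsupp : HasCompactSupport fun x => max (v x) 0) :
    ∫ x, max (v x) 0 ^ (n + 2) * deriv (deriv v) x ≤ 0 := by
  have hcont' : Continuous (deriv v) := hv.continuous_deriv (by norm_num)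
  have hcont'' : Continuous (deriv (deriv v)) := (ContDiff.deriv' hv).continuous_deriv le_rfl
  have hderiv (x : ℝ) : HasDerivAt (fun x => max (v x) 0 ^ (n + 2) * deriv v x)
      ((n + 2) * (max (v x) 0 ^ (n + 1) * deriv v x ^ 2)
        + max (v x) 0 ^ (n + 2) * deriv (deriv v) x) x := by
    have hvx : HasDerivAt v (deriv v x) x := (hv.differentiable (by norm_num) x).hasDerivAt
    refine (((hasDerivAt_max_zero_pow n (v x)).comp x hvx).mul
      (hv.differentiable_deriv_two x).hasDerivAt).congr_deriv ?_
    simp only [Function.comp_apply]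
    ring
  have hint_sq : Integrable fun x => ((n : ℝ) + 2) * (max (v x) 0 ^ (n + 1) * deriv v x ^ 2) :=
    (integrable_max_zero_pow_mul hv.continuous (hcont'.pow 2) hsupp n).const_mul _
  have hint := integrable_max_zero_pow_mul hv.continuous hcont'' hsupp (n + 1)
  have hzero := integral_eq_zero_of_hasDerivAt_of_integrable hderiv (hint_sq.add hint)
    (integrable_max_zero_pow_mul hv.continuous hcont' hsupp (n + 1))
  rw [integral_add hint_sq hint] at hzero
  have hdissip : 0 ≤ ∫ x, ((n : ℝ) + 2) * (max (v x) 0 ^ (n + 1) * deriv v x ^ 2) :=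
    integral_nonneg fun x => by positivity
  linarith

theorem pow_three_sub_pow_three_le {a b δ Q : ℝ} (ha : 0 ≤ a) (hb : 0 ≤ b) (haQ : a ≤ Q)
    (hbQ : b ≤ Q) (hδ : 0 ≤ δ) (hab : b ≤ a + δ) : b ^ 3 - a ^ 3 ≤ 3 * δ * Q ^ 2 := by
  have hsum : a ^ 2 + a * b + b ^ 2 ≤ 3 * Q ^ 2 := by nlinarith
  calc b ^ 3 - a ^ 3 = (b - a) * (a ^ 2 + a * b + b ^ 2) := by ring
    _ ≤ δ * (a ^ 2 + a * b + b ^ 2) := by gcongr; linarith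
    _ ≤ δ * (3 * Q ^ 2) := by gcongr
    _ = 3 * δ * Q ^ 2 := by ring

section MaximumPrinciple

variable {v : ℝ → ℝ → ℝ} {Q : ℝ → ℝ} {α β : ℝ}

theorem hasCompactSupport_max_zero_of_le {g : ℝ → ℝ} (hQ : HasCompactSupport Q)
    (hgQ : ∀ x, g x ≤ Q x) : HasCompactSupport fun x => max (g x) 0 :=
  hQ.mono fun x hx hQx => hx (max_eq_right ((hgQ x).trans_eq hQx))

theorem eventually_lt_slope_neg_integral_max_zero_pow_three {s c : ℝ} (hs : s ∈ Ioo α β)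
    (hv : ∀ r ∈ Icc α β, ContDiff ℝ 2 (v r))
    (hdiff : ∀ x, DifferentiableAt ℝ (fun r => v r x) s)
    (hsub : ∀ x, deriv (fun r => v r x) s ≤ deriv (deriv (v s)) x)
    (hQcont : Continuous Q) (hQ : HasCompactSupport Q) (hvQ : ∀ r ∈ Icc α β, ∀ x, v r x ≤ Q x)
    (hincr : ∃ C, 0 ≤ C ∧ ∀ r ∈ Ioo s β, ∀ x, max (v r x) 0 ≤ max (v s x) 0 + C * (r - s))
    (hc : c < 0) :
    ∀ᶠ r in 𝓝[>] s, c < slope (fun r => ∫ x, -(max (v r x) 0 ^ 3)) s r := by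
  obtain ⟨C, hC, hincr⟩ := hincr
  have hsupp (r) (hr : r ∈ Icc α β) : HasCompactSupport fun x => max (v r x) 0 :=
    hasCompactSupport_max_zero_of_le hQ (hvQ r hr)
  have hmaxQ {r} (hr : r ∈ Icc α β) (x) : max (v r x) 0 ≤ max (Q x) 0 :=
    max_le_max_right 0 (hvQ r hr x)
  have hsI : s ∈ Icc α β := Ioo_subset_Icc_self hs
  have hderiv (x : ℝ) : HasDerivAt (fun r => -(max (v r x) 0 ^ 3))
      (-(3 * max (v s x) 0 ^ 2 * deriv (fun r => v r x) s)) s := by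
    refine ((hasDerivAt_max_zero_pow 1 (v s x)).comp s (hdiff x).hasDerivAt).neg.congr_deriv ?_
    norm_num
  refine eventually_lt_slope_integral (G := fun x => 3 * C * max (Q x) 0 ^ 2)
    (L := fun x => -3 * (max (v s x) 0 ^ 2 * deriv (deriv (v s)) x)) hs.2 (fun r hr => ?_) hderiv
    ((integrable_max_zero_pow_mul (hv s hsI).continuous
      ((ContDiff.deriv' (hv s hsI)).continuous_deriv le_rfl) (hsupp s hsI) 1).const_mul _)
    (fun x => ?_) ?_ (fun r hr x => ?_) ?_
  · have hr' : r ∈ Icc α β := ⟨hs.1.le.trans hr.1, hr.2.le⟩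
    simpa using (integrable_max_zero_pow_mul (hv r hr').continuous continuous_one
      (hsupp r hr') 2).neg
  · have := mul_le_mul_of_nonneg_left (hsub x) (sq_nonneg (max (v s x) 0))
    linarith
  · simpa using (integrable_max_zero_pow_mul hQcont continuous_one
      (hasCompactSupport_max_zero_of_le hQ fun _ => le_rfl) 1).const_mul (3 * C)
  · have hr' : r ∈ Icc α β := ⟨hs.1.le.trans hr.1.le, hr.2.le⟩
    have := pow_three_sub_pow_three_le (le_max_right (v s x) 0) (le_max_right (v r x) 0)
      (hmaxQ hsI x) (hmaxQ hr' x) (mul_nonneg hC (sub_nonneg.2 hr.1.le)) (hincr r hr x)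
    linarith
  · rw [integral_const_mul]
    linarith [integral_max_zero_pow_mul_deriv_deriv_nonpos 0 (hv s hsI) (hsupp s hsI)]

theorem continuousOn_integral_max_zero_pow (n : ℕ) {I : Set ℝ}
    (hv : ∀ r ∈ I, Continuous (v r)) (hcont : ∀ x, ContinuousOn (fun r => v r x) I)
    (hQcont : Continuous Q) (hQ : HasCompactSupport Q) (hvQ : ∀ r ∈ I, ∀ x, v r x ≤ Q x) :
    ContinuousOn (fun r => ∫ x, max (v r x) 0 ^ (n + 1)) I := by
  refine continuousOn_of_dominated (bound := fun x => max (Q x) 0 ^ (n + 1))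
    (fun r hr => (((hv r hr).max continuous_const).pow _).aestronglyMeasurable)
    (fun r hr => ae_of_all _ fun x => ?_) ?_
    (ae_of_all _ fun x => ((hcont x).sup continuousOn_const).pow _)
  · rw [norm_pow, Real.norm_of_nonneg (le_max_right _ _)]
    gcongr
    exact hvQ r hr x
  · simpa using integrable_max_zero_pow_mul hQcont continuous_one
      (hasCompactSupport_max_zero_of_le hQ fun _ => le_rfl) n

theorem nonpos_of_integral_max_zero_pow_nonpos {n : ℕ} {g : ℝ → ℝ} (hg : Continuous g)
    (hsupp : HasCompactSupport fun x => max (g x) 0)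
    (hint : ∫ x, max (g x) 0 ^ (n + 1) ≤ 0) (x : ℝ) : g x ≤ 0 := by
  have hnonneg : 0 ≤ fun x => max (g x) 0 ^ (n + 1) := fun x => by positivity
  have hcont : Continuous fun x => max (g x) 0 ^ (n + 1) := (hg.max continuous_const).pow _
  have hae := (integral_eq_zero_iff_of_nonneg hnonneg
    (by simpa using integrable_max_zero_pow_mul hg continuous_one hsupp n)).1
    (hint.antisymm (integral_nonneg hnonneg))
  have hzero := congrFun (Measure.eq_of_ae_eq hae hcont continuous_const) x
  exact max_eq_right_iff.1 (pow_eq_zero_iff n.succ_ne_zero |>.1 hzero)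

theorem nonpos_of_subcaloric (hαβ : α ≤ β)
    (hv : ∀ r ∈ Icc α β, ContDiff ℝ 2 (v r))
    (hcont : ∀ x, ContinuousOn (fun r => v r x) (Icc α β))
    (hdiff : ∀ s ∈ Ioo α β, ∀ x, DifferentiableAt ℝ (fun r => v r x) s)
    (hsub : ∀ s ∈ Ioo α β, ∀ x, deriv (fun r => v r x) s ≤ deriv (deriv (v s)) x)
    (hQcont : Continuous Q) (hQ : HasCompactSupport Q) (hvQ : ∀ r ∈ Icc α β, ∀ x, v r x ≤ Q x)
    (hincr : ∀ s ∈ Ioo α β, ∃ C, 0 ≤ C ∧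
      ∀ r ∈ Ioo s β, ∀ x, max (v r x) 0 ≤ max (v s x) 0 + C * (r - s))
    (hα : ∀ x, v α x ≤ 0) (x : ℝ) : v β x ≤ 0 := by
  have hΦ : ContinuousOn (fun r => ∫ x, -(max (v r x) 0 ^ 3)) (Icc α β) := by
    simp only [integral_neg]
    exact (continuousOn_integral_max_zero_pow 2 (fun r hr => (hv r hr).continuous) hcont hQcont
      hQ hvQ).neg
  have hle := add_integral_le_of_eventually_lt_slope hαβ hΦ (k := fun _ => 0) continuousOn_const
    fun s hs c hc => eventually_lt_slope_neg_integral_max_zero_pow_three hs hv (hdiff s hs)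
      (hsub s hs) hQcont hQ hvQ (hincr s hs) hc
  have hβ : β ∈ Icc α β := right_mem_Icc.2 hαβ
  refine nonpos_of_integral_max_zero_pow_nonpos (n := 2) (hv β hβ).continuous
    (hasCompactSupport_max_zero_of_le hQ (hvQ β hβ)) ?_ x
  simpa [integral_neg, fun x => max_eq_right (hα x)] using hle

end MaximumPrinciple

/-! ### Comparison with barriers -/

/-- `y` is a nonnegative classical supersolution of `∂ₛy = ∂ₓ²y + N(x, y)` at the times in `I`.
Regularity is only separate: `C²` in space at each time, differentiable in time at each point, with
no joint continuity and no bound on the derivatives that is locally uniform in time. -/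
structure IsNonnegSupersolutionOn (N : ℝ → ℝ → ℝ) (y : ℝ → ℝ → ℝ) (I : Set ℝ) : Prop where
  nonneg : ∀ s ∈ I, ∀ x, 0 ≤ y s x
  contDiff : ∀ s ∈ I, ContDiff ℝ 2 (y s)
  differentiableAt : ∀ s ∈ I, ∀ x, DifferentiableAt ℝ (fun r => y r x) s
  le_deriv : ∀ s ∈ I, ∀ x, deriv (deriv (y s)) x + N x (y s x) ≤ deriv (fun r => y r x) s

namespace IsNonnegSupersolutionOn

variable {N : ℝ → ℝ → ℝ} {y : ℝ → ℝ → ℝ} {I J : Set ℝ}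

theorem mono (hy : IsNonnegSupersolutionOn N y J) (hIJ : I ⊆ J) :
    IsNonnegSupersolutionOn N y I where
  nonneg s hs := hy.nonneg s (hIJ hs)
  contDiff s hs := hy.contDiff s (hIJ hs)
  differentiableAt s hs := hy.differentiableAt s (hIJ hs)
  le_deriv s hs := hy.le_deriv s (hIJ hs)

theorem continuousOn (hy : IsNonnegSupersolutionOn N y I) (x : ℝ) :
    ContinuousOn (fun s => y s x) I :=
  fun s hs => (hy.differentiableAt s hs x).continuousAt.continuousWithinAt

end IsNonnegSupersolutionOn

/-- Comparison between the times `α` and `β` with the subsolutions `q(x) - M (s - α)` of the heat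
equation, `q'' ≥ -M`, which are nonpositive off `(-R, R)`: if such a barrier lies below `y` at
time `α`, it lies below `y` at time `β`. -/
def BarriersPersist (R : ℝ) (y : ℝ → ℝ → ℝ) (α β : ℝ) : Prop :=
  ∀ (q : ℝ → ℝ) (M : ℝ), ContDiff ℝ 2 q → 0 ≤ M → (∀ x, -M ≤ deriv (deriv q) x) →
    (∀ x, R ≤ |x| → q x ≤ 0) → (∀ x, q x ≤ y α x) → ∀ x, q x - M * (β - α) ≤ y β x

theorem deriv_deriv_sub_const (q : ℝ → ℝ) (c : ℝ) :
    deriv (deriv fun x => q x - c) = deriv (deriv q) := by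
  congr 1
  exact funext fun x => deriv_sub_const c

theorem deriv_deriv_fun_sub {p q : ℝ → ℝ} (hp : ContDiff ℝ 2 p) (hq : ContDiff ℝ 2 q) (x : ℝ) :
    deriv (deriv fun x => p x - q x) x = deriv (deriv p) x - deriv (deriv q) x := by
  have hderiv : (deriv fun x => p x - q x) = fun x => deriv p x - deriv q x :=
    funext fun x => deriv_fun_sub (hp.differentiable (by norm_num) x)
      (hq.differentiable (by norm_num) x)
  rw [hderiv, deriv_fun_sub (hp.differentiable_deriv_two x) (hq.differentiable_deriv_two x)]

namespace BarriersPersist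

variable {R α β γ : ℝ} {y : ℝ → ℝ → ℝ}

theorem refl (R : ℝ) (y : ℝ → ℝ → ℝ) (α : ℝ) : BarriersPersist R y α α :=
  fun q M _ _ _ _ hqα x => by simpa using hqα x

theorem trans (hαβ : α ≤ β) (h₁ : BarriersPersist R y α β) (h₂ : BarriersPersist R y β γ) :
    BarriersPersist R y α γ := by
  intro q M hq hM hq'' hqR hqα x
  have := h₂ (fun x => q x - M * (β - α)) M (hq.sub contDiff_const) hM
    (by simpa only [deriv_deriv_sub_const] using hq'')
    (fun x hx => by nlinarith [hqR x hx, mul_nonneg hM (sub_nonneg.2 hαβ)])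
    (h₁ q M hq hM hq'' hqR hqα) x
  linarith

theorem of_forall_lt (hR : 0 < R) (h : ∀ R', 0 < R' → R' < R → BarriersPersist R' y α β) :
    BarriersPersist R y α β := by
  intro q M hq hM hq'' hqR hqα x
  refine le_of_forall_pos_le_add fun ε hε => ?_
  have hsub : {x | ε ≤ q x} ⊆ Metric.ball 0 R := fun x (hx : ε ≤ q x) => by
    by_contra hxR
    have : R ≤ |x| := by simpa using hxR
    linarith [hqR x this]
  obtain ⟨R', hR', hsub'⟩ := exists_pos_lt_subset_ball hR
    (isClosed_le continuous_const hq.continuous) hsub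
  have := h R' hR'.1 hR'.2 (fun x => q x - ε) M (hq.sub contDiff_const) hM
    (by simpa only [deriv_deriv_sub_const] using hq'')
    (fun x hx => by
      by_contra! hpos
      have : |x| < R' := by simpa using hsub' (show ε ≤ q x by linarith)
      linarith)
    (fun x => by linarith [hqα x]) x
  linarith

theorem exists_lower_bound {R' : ℝ} (hR' : 0 < R') (hR'R : R' < R) (hyα : ContDiff ℝ 2 (y α))
    (hα : ∀ x, 0 ≤ y α x) :
    ∃ C, 0 ≤ C ∧ ∀ β, BarriersPersist R y α β → ∀ x, |x| ≤ R' → y α x - C * (β - α) ≤ y β x := by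
  let χ : ContDiffBump (0 : ℝ) := ⟨R', R, hR', hR'R⟩
  have hq : ContDiff ℝ 2 fun x => χ x * y α x := χ.contDiff.mul hyα
  have hsupp : HasCompactSupport fun x => χ x * y α x := χ.hasCompactSupport.mul_right
  obtain ⟨C, hC⟩ := hsupp.deriv.deriv.exists_bound_of_continuous
    ((ContDiff.deriv' hq).continuous_deriv le_rfl)
  refine ⟨C, (norm_nonneg _).trans (hC 0), fun β hβ x hx => ?_⟩
  have := hβ _ C hq ((norm_nonneg _).trans (hC 0)) (fun x => (abs_le.1 (hC x)).1)
    (fun x hx => by rw [χ.zero_of_le_dist (by simpa using hx), zero_mul])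
    (fun x => mul_le_of_le_one_left (hα x) χ.le_one) x
  simpa [χ.one_of_mem_closedBall (show x ∈ Metric.closedBall 0 χ.rIn by simpa using hx)] using this

end BarriersPersist

theorem BarriersPersist.of_forall_Ioo {R α β : ℝ} {y : ℝ → ℝ → ℝ} (hR : 0 < R) (hαβ : α ≤ β)
    (hy : IsNonnegSupersolutionOn 0 y (Icc α β))
    (h : ∀ s ∈ Ioo α β, ∀ r ∈ Ioo s β, BarriersPersist R y s r) : BarriersPersist R y α β := by
  refine BarriersPersist.of_forall_lt hR fun R' hR' hR'R q M hq hM hq'' hqR hqα x => ?_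
  have hqQ : HasCompactSupport fun x => max (q x) 0 :=
    HasCompactSupport.of_support_subset_isCompact (isCompact_Icc (a := -R') (b := R'))
      fun x hx => abs_le.1 (by by_contra! hlt; exact hx (max_eq_right (hqR x hlt.le)))
  have hle (r) (hr : r ∈ Icc α β) (x) : q x - M * (r - α) - y r x ≤ q x := by
    linarith [mul_nonneg hM (sub_nonneg.2 hr.1), hy.nonneg r hr x]
  have hder (s) (hs : s ∈ Icc α β) (x) : HasDerivAt (fun r => q x - M * (r - α) - y r x)
      (-M - deriv (fun r => y r x) s) s := by
    simpa using ((((hasDerivAt_id' s).sub_const α).const_mul M).const_sub (q x)).fun_sub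
      (hy.differentiableAt s hs x).hasDerivAt
  refine sub_nonpos.1 (nonpos_of_subcaloric (v := fun r x => q x - M * (r - α) - y r x)
    (Q := fun x => max (q x) 0) hαβ (fun r hr => (hq.sub contDiff_const).sub (hy.contDiff r hr))
    (fun x s hs => (hder s hs x).continuousAt.continuousWithinAt)
    (fun s hs x => (hder s (Ioo_subset_Icc_self hs) x).differentiableAt) (fun s hs x => ?_)
    (hq.continuous.max continuous_const) hqQ
    (fun r hr x => (hle r hr x).trans (le_max_left _ _)) (fun s hs => ?_)
    (fun x => by simpa using hqα x) x)
  · have hs' := Ioo_subset_Icc_self hs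
    rw [(hder s hs' x).deriv, deriv_deriv_fun_sub (hq.sub contDiff_const) (hy.contDiff s hs'),
      deriv_deriv_sub_const]
    have := hy.le_deriv s hs' x
    simp only [Pi.zero_apply] at this
    linarith [hq'' x]
  · obtain ⟨C, hC, hlow⟩ := BarriersPersist.exists_lower_bound hR' hR'R
      (hy.contDiff s (Ioo_subset_Icc_self hs)) (hy.nonneg s (Ioo_subset_Icc_self hs))
    refine ⟨C, hC, fun r hr x => max_le ?_ (add_nonneg (le_max_right _ _)
      (mul_nonneg hC (sub_nonneg.2 hr.1.le)))⟩
    rcases le_total |x| R' with hx | hx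
    · have := hlow r (h s hs r hr) x hx
      have := le_max_left (q x - M * (s - α) - y s x) 0
      have := mul_nonneg hM (sub_nonneg.2 hr.1.le)
      linarith
    · have hr' : r ∈ Icc α β := ⟨hs.1.le.trans hr.1.le, hr.2.le⟩
      linarith [hle r hr' x, hqR x hx, le_max_right (q x - M * (s - α) - y s x) 0,
        mul_nonneg hC (sub_nonneg.2 hr.1.le)]

theorem deriv_deriv_nonneg_of_isLocalMin {g : ℝ → ℝ} {x : ℝ} (hmin : IsLocalMin g x)
    (hg : ContinuousAt g x) : 0 ≤ deriv (deriv g) x := by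
  by_contra! hneg
  have hconst : g =ᶠ[𝓝 x] fun _ => g x := by
    filter_upwards [hmin, isLocalMax_of_deriv_deriv_neg hneg hmin.deriv_eq_zero hg] with z h₁ h₂
    exact le_antisymm h₂ h₁
  rw [hconst.deriv.deriv_eq, deriv_const', deriv_const] at hneg
  exact hneg.false

theorem pos_of_frequently_pos_of_deriv_deriv_lt_deriv {g : ℝ → ℝ → ℝ} {s x : ℝ} {U : Set ℝ}
    (hU : U ∈ 𝓝 x) (hspace : ContinuousAt (g s) x)
    (hdiff : ∀ z ∈ U, DifferentiableAt ℝ (fun r => g r z) s)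
    (hstrict : deriv (deriv (g s)) x < deriv (fun r => g r x) s)
    (hpos : ∃ᶠ r in 𝓝[<] s, ∀ z ∈ U, 0 < g r z) : 0 < g s x := by
  by_contra! hle
  have hmin : IsLocalMin (g s) x := by
    filter_upwards [hU] with z hz
    exact hle.trans (ge_of_tendsto_of_frequently
      ((hdiff z hz).continuousAt.tendsto.mono_left nhdsWithin_le_nhds)
      (hpos.mono fun r hr => (hr z hz).le))
  have hderiv := (deriv_deriv_nonneg_of_isLocalMin hmin hspace).trans_lt hstrict
  have hslope : Tendsto (slope (fun r => g r x) s) (𝓝[<] s) (𝓝 (deriv (fun r => g r x) s)) :=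
    (hasDerivAt_iff_tendsto_slope.1 (hdiff x (mem_of_mem_nhds hU)).hasDerivAt).mono_left
      (nhdsWithin_mono s fun r (hr : r < s) => hr.ne)
  obtain ⟨r, hr, hslope_pos, hrs⟩ := (hpos.and_eventually ((hslope.eventually
    (lt_mem_nhds hderiv)).and self_mem_nhdsWithin)).exists
  have hlt : g r x < g s x := by
    rw [slope_def_field, div_pos_iff] at hslope_pos
    rcases hslope_pos with h | h <;> linarith
  exact (hlt.trans_le hle).not_gt (hr x (mem_of_mem_nhds hU))

theorem forall_pos_of_forall_lt_pos {T X : Type*} [LinearOrder T] [TopologicalSpace T]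
    [OrderClosedTopology T] [TopologicalSpace X] [T2Space X] {g : T → X → ℝ} {S : Set T} {K : Set X}
    (hS : IsCompact S) (hK : IsCompact K) (hg : ContinuousOn (Function.uncurry g) (S ×ˢ K))
    (hstep : ∀ s ∈ S, (∀ r ∈ S, r < s → ∀ x ∈ K, 0 < g r x) → ∀ x ∈ K, 0 < g s x) :
    ∀ s ∈ S, ∀ x ∈ K, 0 < g s x := by
  by_contra! hbad
  obtain ⟨s, hs, x, hx, hsx⟩ := hbad
  have hcompact : IsCompact (S ×ˢ K ∩ Function.uncurry g ⁻¹' Iic 0) :=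
    (hS.prod hK).of_isClosed_subset
      (hg.preimage_isClosed_of_isClosed (hS.prod hK).isClosed isClosed_Iic) inter_subset_left
  obtain ⟨_, ⟨⟨s₀, x₀⟩, ⟨⟨hs₀, hx₀⟩, hneg⟩, rfl⟩, hleast⟩ :=
    (hcompact.image continuous_fst).exists_isLeast ⟨s, (s, x), ⟨⟨hs, hx⟩, hsx⟩, rfl⟩
  refine (hstep s₀ hs₀ (fun r hr hrs x hx => ?_) x₀ hx₀).not_ge hneg
  by_contra! hrx
  exact (hleast ⟨(r, x), ⟨⟨hr, hx⟩, hrx⟩, rfl⟩).not_gt hrs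

theorem exists_disjoint_Ioo_of_not_frequently_mem {S : Set ℝ} {α s : ℝ} (hS : IsCompact S)
    (hα : α ∈ S) (hαs : α < s) (hfreq : ¬ ∃ᶠ r in 𝓝[<] s, r ∈ S) :
    ∃ γ ∈ S, γ < s ∧ Disjoint (Ioo γ s) S := by
  rw [not_frequently] at hfreq
  obtain ⟨a, has, ha⟩ := (mem_nhdsLT_iff_exists_Ioo_subset' hαs).1 hfreq
  have hαa : α ≤ a := not_lt.1 fun haα => ha ⟨haα, hαs⟩ hα
  obtain ⟨γ, ⟨hγS, hγa⟩, hγ⟩ := (hS.inter_right isClosed_Iic).exists_isGreatest ⟨α, hα, hαa⟩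
  refine ⟨γ, hγS, hγa.trans_lt has, disjoint_left.2 fun r hr hrS => ?_⟩
  rcases le_or_gt r a with hra | hra
  · exact (hγ ⟨hrS, hra⟩).not_gt hr.1
  · exact ha ⟨hra, hr.2⟩ hrS

theorem IsNonnegSupersolutionOn.deriv_deriv_sub_barrier_lt_deriv {y : ℝ → ℝ → ℝ} {q : ℝ → ℝ}
    {S : Set ℝ} {s x M P : ℝ} (hy : IsNonnegSupersolutionOn 0 y S) (hs : s ∈ S)
    (hq : ContDiff ℝ 2 q) (hq'' : -M ≤ deriv (deriv q) x) (hMP : M < P) (α c : ℝ) :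
    deriv (deriv fun x => y s x - (q x - P * (s - α) - c)) x
      < deriv (fun r => y r x - (q x - P * (r - α) - c)) s := by
  have htime : HasDerivAt (fun r => y r x - (q x - P * (r - α) - c))
      (deriv (fun r => y r x) s + P) s := by
    simpa using (hy.differentiableAt s hs x).hasDerivAt.fun_sub
      ((((((hasDerivAt_id' s).sub_const α).const_mul P).const_sub (q x)).sub_const c))
  rw [htime.deriv, deriv_deriv_fun_sub (hy.contDiff s hs)
    ((hq.sub contDiff_const).sub contDiff_const), deriv_deriv_sub_const, deriv_deriv_sub_const]
  have := hy.le_deriv s hs x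
  simp only [Pi.zero_apply] at this
  linarith

theorem IsNonnegSupersolutionOn.sub_barrier_pos_of_frequently_pos {y : ℝ → ℝ → ℝ} {q : ℝ → ℝ}
    {S : Set ℝ} {R s x M P : ℝ} (hy : IsNonnegSupersolutionOn 0 y S) (hs : s ∈ S)
    (hq : ContDiff ℝ 2 q) (hq'' : -M ≤ deriv (deriv q) x) (hMP : M < P) (α c : ℝ) (hx : |x| < R)
    (hpos : ∃ᶠ r in 𝓝[<] s, ∀ z ∈ Icc (-R) R, 0 < y r z - (q z - P * (r - α) - c)) :
    0 < y s x - (q x - P * (s - α) - c) :=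
  pos_of_frequently_pos_of_deriv_deriv_lt_deriv
    (g := fun s x => y s x - (q x - P * (s - α) - c))
    (Icc_mem_nhds (abs_lt.1 hx).1 (abs_lt.1 hx).2)
    ((hy.contDiff s hs).continuous.sub
      ((hq.continuous.sub continuous_const).sub continuous_const)).continuousAt
    (fun z _ => (hy.differentiableAt s hs z).fun_sub (by fun_prop))
    (hy.deriv_deriv_sub_barrier_lt_deriv hs hq hq'' hMP α c) hpos

section Portion

variable {R α : ℝ} {y : ℝ → ℝ → ℝ} {S : Set ℝ} {n : ℝ≥0}

theorem IsNonnegSupersolutionOn.sub_barrier_pos {q : ℝ → ℝ} {M P c : ℝ}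
    (hS : IsCompact S) (hα : IsLeast S α) (hy : IsNonnegSupersolutionOn 0 y S)
    (hlip : ∀ s ∈ S, LipschitzOnWith n (y s) (Icc (-R) R))
    (hgap : ∀ γ ∈ S, ∀ δ ∈ S, γ < δ → Disjoint (Ioo γ δ) S → BarriersPersist R y γ δ)
    (hq : ContDiff ℝ 2 q) (hM : 0 ≤ M) (hq'' : ∀ x, -M ≤ deriv (deriv q) x)
    (hqR : ∀ x, R ≤ |x| → q x ≤ 0) (hqα : ∀ x, q x ≤ y α x) (hMP : M < P) (hc : 0 < c) :
    ∀ s ∈ S, ∀ x, 0 < y s x - (q x - P * (s - α) - c) := by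
  have hP (s) (hs : s ∈ S) : 0 ≤ P * (s - α) :=
    mul_nonneg (hM.trans hMP.le) (sub_nonneg.2 (hα.2 hs))
  have hoff (s) (hs : s ∈ S) (x) (hx : R ≤ |x|) : 0 < y s x - (q x - P * (s - α) - c) := by
    linarith [hy.nonneg s hs x, hqR x hx, hP s hs]
  suffices h : ∀ s ∈ S, ∀ x ∈ Icc (-R) R, 0 < y s x - (q x - P * (s - α) - c) from
    fun s hs x => (le_total R |x|).elim (hoff s hs x) fun hx => h s hs x (abs_le.1 hx)
  refine forall_pos_of_forall_lt_pos hS isCompact_Icc (ContinuousOn.sub ?_ ?_)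
    fun s hs hlt x _ => ?_
  · exact continuousOn_prod_of_continuousOn_lipschitzOnWith' _ n hlip fun x _ => hy.continuousOn x
  · have := hq.continuous
    fun_prop
  rcases (hα.2 hs).eq_or_lt with rfl | hαs
  · linarith [hqα x]
  by_cases hfreq : ∃ᶠ r in 𝓝[<] s, r ∈ S
  · refine (le_or_gt R |x|).elim (hoff s hs x) fun hxR =>
      hy.sub_barrier_pos_of_frequently_pos hs hq (hq'' x) hMP α c hxR ?_
    exact (hfreq.and_eventually self_mem_nhdsWithin).mono fun r hr => hlt r hr.1 hr.2
  · obtain ⟨γ, hγ, hγs, hdisj⟩ := exists_disjoint_Ioo_of_not_frequently_mem hS hα.1 hαs hfreq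
    have hbelow (x) : q x - (P * (γ - α) + c) ≤ y γ x := by
      rcases le_total R |x| with hx | hx
      · linarith [hoff γ hγ x hx]
      · linarith [hlt γ hγ hγs x (abs_le.1 hx)]
    have := hgap γ hγ s hs hγs hdisj (fun x => q x - (P * (γ - α) + c)) M
      (hq.sub contDiff_const) hM (by simpa only [deriv_deriv_sub_const] using hq'')
      (fun x hx => by linarith [hqR x hx, hP γ hγ]) hbelow x
    nlinarith

theorem BarriersPersist.of_lipschitzOnWith {β : ℝ} (hS : IsCompact S) (hα : IsLeast S α)
    (hβ : β ∈ S) (hy : IsNonnegSupersolutionOn 0 y S)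
    (hlip : ∀ s ∈ S, LipschitzOnWith n (y s) (Icc (-R) R))
    (hgap : ∀ γ ∈ S, ∀ δ ∈ S, γ < δ → Disjoint (Ioo γ δ) S → BarriersPersist R y γ δ) :
    BarriersPersist R y α β := by
  intro q M hq hM hq'' hqR hqα x
  have hlim : Tendsto (fun ε => q x - (M + ε) * (β - α) - ε) (𝓝[>] 0)
      (𝓝 (q x - M * (β - α))) := by
    refine Tendsto.mono_left ?_ nhdsWithin_le_nhds
    exact (by fun_prop : Continuous fun ε => q x - (M + ε) * (β - α) - ε).tendsto' _ _ (by ring)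
  refine le_of_tendsto hlim ?_
  filter_upwards [self_mem_nhdsWithin] with ε hε
  exact (sub_pos.1 (hy.sub_barrier_pos hS hα hlip hgap hq hM hq'' hqR hqα
    (lt_add_of_pos_right M hε) hε β hβ x)).le

end Portion

section Propagation

variable {Rel : ℝ → ℝ → Prop} {a b : ℝ}

theorem rel_of_eventually_rel (hab : a ≤ b) (hrefl : ∀ s, Rel s s)
    (htrans : ∀ r s t, r ≤ s → s ≤ t → Rel r s → Rel s t → Rel r t)
    (hloc : ∀ s ∈ Icc a b, ∀ᶠ p : ℝ × ℝ in 𝓝 (s, s),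
      a ≤ p.1 → p.1 ≤ p.2 → p.2 ≤ b → Rel p.1 p.2) : Rel a b := by
  have hloc' (s : Icc a b) : ∃ V ∈ 𝓝 (s : ℝ), ∀ r ∈ V, ∀ t ∈ V, a ≤ r → r ≤ t → t ≤ b → Rel r t :=
    eventually_prod_self_iff.1 (by simpa only [nhds_prod_eq] using hloc s s.2)
  choose V hV hrel using hloc'
  obtain ⟨t, ht0, htmono, ⟨m, hm⟩, ht⟩ := exists_monotone_Icc_subset_open_cover_Icc hab
    (c := fun s => Subtype.val ⁻¹' interior (V s))
    (fun s => isOpen_interior.preimage continuous_subtype_val)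
    fun s _ => mem_iUnion.2 ⟨s, mem_interior_iff_mem_nhds.2 (hV s)⟩
  have hchain (n : ℕ) : Rel a (t n) := by
    induction n with
    | zero => exact by rw [ht0]; exact hrefl a
    | succ n ih =>
      have hle : t n ≤ t (n + 1) := htmono n.le_succ
      obtain ⟨s, hs⟩ := ht n
      exact htrans _ _ _ (t n).2.1 hle ih (hrel s _ (interior_subset (hs ⟨le_rfl, hle⟩))
        _ (interior_subset (hs ⟨hle, le_rfl⟩)) (t n).2.1 hle (t (n + 1)).2.2)
  simpa only [hm m le_rfl] using hchain m

theorem rel_of_rel_gaps {E : Set ℝ} {α β : ℝ} (hE : IsClosed E) (hαβ : α ≤ β)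
    (htrans : ∀ r s t, r ≤ s → s ≤ t → Rel r s → Rel s t → Rel r t)
    (hfree : ∀ γ δ, α ≤ γ → γ ≤ δ → δ ≤ β → Disjoint (Ioo γ δ) E → Rel γ δ)
    (hbridge : ∀ γ δ, IsLeast (E ∩ Icc α β) γ → δ ∈ E ∩ Icc α β → Rel γ δ) : Rel α β := by
  have hcompact : IsCompact (E ∩ Icc α β) := isCompact_Icc.inter_left hE
  rcases (E ∩ Icc α β).eq_empty_or_nonempty with hempty | hne
  · refine hfree α β le_rfl hαβ le_rfl (disjoint_left.2 fun r hr hrE => ?_)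
    exact hempty.subset ⟨hrE, Ioo_subset_Icc_self hr⟩
  obtain ⟨γ, hγ⟩ := hcompact.exists_isLeast hne
  obtain ⟨δ, hδ⟩ := hcompact.exists_isGreatest hne
  have hleft : Rel α γ := hfree α γ le_rfl hγ.1.2.1 hγ.1.2.2 (disjoint_left.2 fun r hr hrE =>
    (hγ.2 ⟨hrE, hr.1.le, hr.2.le.trans hγ.1.2.2⟩).not_gt hr.2)
  have hright : Rel δ β := hfree δ β hδ.1.2.1 hδ.1.2.2 le_rfl (disjoint_left.2 fun r hr hrE =>
    (hδ.2 ⟨hrE, hδ.1.2.1.trans hr.1.le, hr.2.le⟩).not_gt hr.1)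
  exact htrans α δ β hδ.1.2.1 hδ.1.2.2
    (htrans α γ δ hγ.1.2.1 (hγ.2 hδ.1) hleft (hbridge γ δ hγ hδ.1)) hright

-- The points near which `Rel` fails form a closed set; were it nonempty, the portion of it given by
-- `hportion` could be bridged, contradicting its definition.
theorem rel_of_portions (hab : a ≤ b) (hrefl : ∀ s, Rel s s)
    (htrans : ∀ r s t, r ≤ s → s ≤ t → Rel r s → Rel s t → Rel r t)
    (hIoo : ∀ α β, a ≤ α → α ≤ β → β ≤ b → (∀ s ∈ Ioo α β, ∀ r ∈ Ioo s β, Rel s r) → Rel α β)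
    (hportion : ∀ E ⊆ Icc a b, IsClosed E → E.Nonempty → ∃ U, IsOpen U ∧ (E ∩ U).Nonempty ∧
      ∀ S ⊆ E ∩ U, IsCompact S → ∀ α β, IsLeast S α → β ∈ S →
        (∀ γ ∈ S, ∀ δ ∈ S, γ < δ → Disjoint (Ioo γ δ) S → Rel γ δ) → Rel α β) :
    Rel a b := by
  let G : Set ℝ := {s | ∀ᶠ p : ℝ × ℝ in 𝓝 (s, s), a ≤ p.1 → p.1 ≤ p.2 → p.2 ≤ b → Rel p.1 p.2}
  have hG : IsOpen G :=
    isOpen_setOfPred_eventually_nhds.preimage (continuous_id.prodMk continuous_id)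
  have hfree (α β : ℝ) (hα : a ≤ α) (hαβ : α ≤ β) (hβ : β ≤ b)
      (hdisj : Disjoint (Ioo α β) (Icc a b \ G)) : Rel α β := by
    have hsub : Ioo α β ⊆ G := fun s hs => by
      by_contra hsG
      exact disjoint_left.1 hdisj hs ⟨⟨hα.trans hs.1.le, hs.2.le.trans hβ⟩, hsG⟩
    exact hIoo α β hα hαβ hβ fun s hs r hr => rel_of_eventually_rel hr.1.le hrefl htrans fun σ hσ =>
      (hsub ⟨hs.1.trans_le hσ.1, hσ.2.trans_lt hr.2⟩).mono fun p hp h₁ h₂ h₃ =>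
        hp (hα.trans (hs.1.le.trans h₁)) h₂ (h₃.trans (hr.2.le.trans hβ))
  rcases (Icc a b \ G).eq_empty_or_nonempty with hE | hE
  · exact hfree a b le_rfl hab le_rfl (hE ▸ disjoint_empty _)
  have hEclosed : IsClosed (Icc a b \ G) := isClosed_Icc.sdiff hG
  obtain ⟨U, hU, ⟨s, ⟨-, hsG⟩, hsU⟩, hbridge⟩ := hportion _ sdiff_subset hEclosed hE
  obtain ⟨ε, hε, hball⟩ := Metric.isOpen_iff.1 hU s hsU
  refine absurd ?_ hsG
  filter_upwards [Metric.ball_mem_nhds (s, s) hε] with p hp h₁ h₁₂ h₂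
  rw [← ball_prod_same] at hp
  have hsubU : Icc p.1 p.2 ⊆ U :=
    ((convex_ball s ε).ordConnected.out hp.1 hp.2).trans hball
  refine rel_of_rel_gaps hEclosed h₁₂ htrans
    (fun γ δ hγ hγδ hδ => hfree γ δ (h₁.trans hγ) hγδ (hδ.trans h₂)) fun γ δ hγ hδ =>
    hbridge _ (inter_subset_inter_right _ hsubU) (isCompact_Icc.inter_left hEclosed) γ δ hγ hδ
      fun σ hσ τ hτ hστ hdisj => hfree σ τ (h₁.trans hσ.2.1) hστ.le (hτ.2.2.trans h₂) ?_
  exact disjoint_left.2 fun r hr hrE => disjoint_left.1 hdisj hr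
    ⟨hrE, hσ.2.1.trans hr.1.le, hr.2.le.trans hτ.2.2⟩

end Propagation

theorem exists_isOpen_forall_lipschitzOnWith {X E F : Type*} [TopologicalSpace X] [BaireSpace X]
    [Nonempty X] [PseudoEMetricSpace E] [PseudoEMetricSpace F] {y : X → E → F} {K : Set E}
    (hcont : Continuous y) (hlip : ∀ s, ∃ n : ℝ≥0, LipschitzOnWith n (y s) K) :
    ∃ (n : ℝ≥0) (U : Set X), IsOpen U ∧ U.Nonempty ∧ ∀ s ∈ U, LipschitzOnWith n (y s) K := by
  obtain ⟨n, hn⟩ := nonempty_interior_of_iUnion_of_closed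
    (f := fun n : ℕ => y ⁻¹' {g | LipschitzOnWith n g K})
    (fun n => (isClosed_setOfPred_lipschitzOnWith n K).preimage hcont) <| by
      refine eq_univ_of_forall fun s => ?_
      obtain ⟨k, hk⟩ := hlip s
      obtain ⟨n, hn⟩ := exists_nat_ge k
      exact mem_iUnion.2 ⟨n, hk.weaken hn⟩
  exact ⟨n, _, isOpen_interior, hn, fun s hs => interior_subset hs⟩

theorem IsNonnegSupersolutionOn.barriersPersist {R a b : ℝ} {y : ℝ → ℝ → ℝ} (hR : 0 < R)
    (hab : a ≤ b) (hy : IsNonnegSupersolutionOn 0 y (Icc a b)) : BarriersPersist R y a b := by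
  refine rel_of_portions hab (BarriersPersist.refl R y)
    (fun r s t hrs _ => BarriersPersist.trans hrs)
    (fun α β hα hαβ hβ => BarriersPersist.of_forall_Ioo hR hαβ (hy.mono (Icc_subset_Icc hα hβ)))
    fun E hE hEclosed hEne => ?_
  have := hEclosed.completeSpace_coe
  have := hEne.to_subtype
  obtain ⟨n, _, ⟨U, hU, rfl⟩, ⟨s, hs⟩, hlip⟩ := exists_isOpen_forall_lipschitzOnWith
    (X := E) (y := fun s => y s) (K := Icc (-R) R)
    (continuous_pi fun x => continuousOn_iff_continuous_domRestrict.1 ((hy.mono hE).continuousOn x))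
    fun s => ((hy.contDiff s (hE s.2)).contDiffOn).exists_lipschitzOnWith two_ne_zero
      (convex_Icc _ _) isCompact_Icc
  exact ⟨U, hU, ⟨s, s.2, hs⟩, fun S hS hScompact α β hα hβ hgap =>
    BarriersPersist.of_lipschitzOnWith hScompact hα hβ
      (hy.mono fun s hs => hE (hS hs).1) (fun s hs => hlip ⟨s, (hS hs).1⟩ (hS hs).2) hgap⟩

theorem IsNonnegSupersolutionOn.exists_lower_bound {N : ℝ → ℝ → ℝ} {y : ℝ → ℝ → ℝ} {R M a b : ℝ}
    (hy : IsNonnegSupersolutionOn N y (Icc a b)) (hR : 0 < R) (hab : a ≤ b) (hM : 0 ≤ M)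
    (hN : ∀ r ∈ Icc a b, ∀ x, -M ≤ N x (y r x)) :
    ∃ C, 0 ≤ C ∧ ∀ r ∈ Icc a b, ∀ x, |x| ≤ R → y a x - C * (r - a) ≤ y r x := by
  have hderiv : ∀ r ∈ Icc a b, ∀ x, HasDerivAt (fun s => y s x + M * (s - a))
      (deriv (fun s => y s x) r + M) r := fun r hr x => by
    simpa using (hy.differentiableAt r hr x).hasDerivAt.fun_add
      (((hasDerivAt_id r).sub_const a).const_mul M)
  have hcaloric : IsNonnegSupersolutionOn 0 (fun r x => y r x + M * (r - a)) (Icc a b) :=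
    { nonneg := fun r hr x => add_nonneg (hy.nonneg r hr x) (mul_nonneg hM (sub_nonneg.2 hr.1))
      contDiff := fun r hr => (hy.contDiff r hr).add contDiff_const
      differentiableAt := fun r hr x => (hderiv r hr x).differentiableAt
      le_deriv := fun r hr x => by
        rw [(hderiv r hr x).deriv, show (deriv fun x => y r x + M * (r - a)) = deriv (y r) from
          funext fun x => deriv_add_const _]
        simp only [Pi.zero_apply]
        linarith [hy.le_deriv r hr x, hN r hr x] }
  have ha : a ∈ Icc a b := left_mem_Icc.2 hab
  obtain ⟨C, hC, hlow⟩ := BarriersPersist.exists_lower_bound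
    (y := fun r x => y r x + M * (r - a)) hR (lt_add_one R) (hcaloric.contDiff a ha)
    (hcaloric.nonneg a ha)
  refine ⟨C + M, add_nonneg hC hM, fun r hr x hx => ?_⟩
  have := hlow r ((hcaloric.mono (Icc_subset_Icc_right hr.2)).barriersPersist (by linarith) hr.1)
    x hx
  linarith

/-! ### Saturation of a supersolution -/

/-- The truncation `r ↦ r / (1 + ε r)`, bounded by `ε⁻¹` on `[0, ∞)`. It is concave there and has
derivative `(1 + ε r)⁻²`, so it maps supersolutions of `y_t = y_xx - 2 f y + y²` with `f ≥ 0` to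
bounded supersolutions. -/
noncomputable def saturate (ε r : ℝ) : ℝ := r / (1 + ε * r)

section Saturate

variable {ε r : ℝ}

theorem one_le_one_add_mul (hε : 0 ≤ ε) (hr : 0 ≤ r) : 1 ≤ 1 + ε * r :=
  le_add_of_nonneg_right (mul_nonneg hε hr)

theorem saturate_nonneg (hε : 0 ≤ ε) (hr : 0 ≤ r) : 0 ≤ saturate ε r :=
  div_nonneg hr (zero_le_one.trans (one_le_one_add_mul hε hr))

theorem saturate_le_inv (hε : 0 < ε) (hr : 0 ≤ r) : saturate ε r ≤ ε⁻¹ := by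
  rw [saturate, div_le_iff₀ (by linarith [one_le_one_add_mul hε.le hr]), mul_add,
    inv_mul_cancel_left₀ hε.ne']
  linarith [inv_pos.2 hε]

theorem hasDerivAt_saturate_comp {v : ℝ → ℝ} {v' x : ℝ} (hv : HasDerivAt v v' x)
    (hx : 1 + ε * v x ≠ 0) : HasDerivAt (fun x => saturate ε (v x)) (v' / (1 + ε * v x) ^ 2) x := by
  refine (hv.fun_div ((hv.const_mul ε).const_add 1) hx).congr_deriv ?_
  ring

theorem tendsto_saturate (r : ℝ) : Tendsto (fun ε => saturate ε r) (𝓝 0) (𝓝 r) := by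
  have : ContinuousAt (fun ε => saturate ε r) 0 :=
    continuousAt_const.div (by fun_prop) (by simp)
  simpa [ContinuousAt, saturate] using this

theorem contDiff_saturate_comp {v : ℝ → ℝ} (hv : ContDiff ℝ 2 v) (hv0 : ∀ x, 0 ≤ v x)
    (hε : 0 ≤ ε) : ContDiff ℝ 2 fun x => saturate ε (v x) :=
  hv.div (contDiff_const.add (contDiff_const.mul hv)) fun x =>
    (zero_lt_one.trans_le (one_le_one_add_mul hε (hv0 x))).ne'

theorem deriv_deriv_saturate_le {v : ℝ → ℝ} (hv : ContDiff ℝ 2 v) (hv0 : ∀ x, 0 ≤ v x)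
    (hε : 0 ≤ ε) (x : ℝ) :
    deriv (deriv fun x => saturate ε (v x)) x ≤ deriv (deriv v) x / (1 + ε * v x) ^ 2 := by
  have hpos : ∀ x, 0 < 1 + ε * v x := fun x =>
    zero_lt_one.trans_le (one_le_one_add_mul hε (hv0 x))
  have hv' : ∀ x, HasDerivAt v (deriv v x) x := fun x =>
    (hv.differentiable (by norm_num) x).hasDerivAt
  have hderiv : (deriv fun x => saturate ε (v x)) = fun x => deriv v x / (1 + ε * v x) ^ 2 :=
    funext fun x => (hasDerivAt_saturate_comp (hv' x) (hpos x).ne').deriv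
  have hderiv₂ := (hv.differentiable_deriv_two x).hasDerivAt.fun_div
    (((hv' x).const_mul ε |>.const_add 1).fun_pow 2) (pow_pos (hpos x) 2).ne'
  rw [hderiv, hderiv₂.deriv]
  have hcurv : 0 ≤ 2 * ε * deriv v x ^ 2 / (1 + ε * v x) ^ 3 := by
    have := hpos x
    positivity
  refine le_of_sub_nonneg (hcurv.trans_eq ?_)
  have := (hpos x).ne'
  field_simp
  push_cast
  ring

end Saturate

/-- The reaction term of the equation `y_t = y_xx - 2 f y + y²` satisfied by `y = -u`. -/
def reaction (f : ℝ → ℝ) (x r : ℝ) : ℝ := r ^ 2 - 2 * f x * r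

theorem reaction_saturate_le_reaction_div {f : ℝ → ℝ} {x ε r : ℝ} (hf : 0 ≤ f x) (hε : 0 ≤ ε)
    (hr : 0 ≤ r) : reaction f x (saturate ε r) ≤ reaction f x r / (1 + ε * r) ^ 2 := by
  have hle : r / (1 + ε * r) ^ 2 ≤ saturate ε r := by
    rw [sq, ← div_div]
    exact div_le_self (saturate_nonneg hε hr) (one_le_one_add_mul hε hr)
  calc reaction f x (saturate ε r) ≤ saturate ε r ^ 2 - 2 * f x * (r / (1 + ε * r) ^ 2) := by
        unfold reaction
        gcongr
    _ = reaction f x r / (1 + ε * r) ^ 2 := by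
        rw [saturate, reaction, div_pow]
        ring

theorem isNonnegSupersolutionOn_neg {f : ℝ → ℝ} {u : ℝ → ℝ → ℝ} {I : Set ℝ}
    (hu : ∀ s ∈ I, ContDiff ℝ 2 (u s)) (hu_nonpos : ∀ s ∈ I, ∀ x, u s x ≤ 0)
    (hu_eq : ∀ s ∈ I, ∀ x, HasDerivAt (fun r => u r x)
      (deriv (deriv (u s)) x - 2 * f x * u s x - u s x ^ 2) s) :
    IsNonnegSupersolutionOn (reaction f) (fun s x => -u s x) I where
  nonneg s hs x := neg_nonneg.2 (hu_nonpos s hs x)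
  contDiff s hs := (hu s hs).neg
  differentiableAt s hs x := (hu_eq s hs x).differentiableAt.fun_neg
  le_deriv s hs x := by
    rw [(hu_eq s hs x).fun_neg.deriv, show (deriv fun x => -u s x) = fun x => -deriv (u s) x from
      funext fun x => deriv.fun_neg, deriv.fun_neg, reaction]
    exact le_of_eq (by ring)

namespace IsNonnegSupersolutionOn

variable {f : ℝ → ℝ} {y : ℝ → ℝ → ℝ} {I : Set ℝ}

theorem saturate_comp {ε : ℝ} (hy : IsNonnegSupersolutionOn (reaction f) y I) (hf : ∀ x, 0 ≤ f x)
    (hε : 0 ≤ ε) : IsNonnegSupersolutionOn (reaction f) (fun s x => saturate ε (y s x)) I := by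
  have hpos : ∀ s ∈ I, ∀ x, 0 < 1 + ε * y s x := fun s hs x =>
    zero_lt_one.trans_le (one_le_one_add_mul hε (hy.nonneg s hs x))
  have hderiv : ∀ s ∈ I, ∀ x, HasDerivAt (fun r => saturate ε (y r x))
      (deriv (fun r => y r x) s / (1 + ε * y s x) ^ 2) s := fun s hs x =>
    hasDerivAt_saturate_comp (hy.differentiableAt s hs x).hasDerivAt (hpos s hs x).ne'
  refine ⟨fun s hs x => saturate_nonneg hε (hy.nonneg s hs x),
    fun s hs => contDiff_saturate_comp (hy.contDiff s hs) (hy.nonneg s hs) hε,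
    fun s hs x => (hderiv s hs x).differentiableAt, fun s hs x => ?_⟩
  rw [(hderiv s hs x).deriv]
  calc _ ≤ deriv (deriv (y s)) x / (1 + ε * y s x) ^ 2
          + reaction f x (y s x) / (1 + ε * y s x) ^ 2 :=
        add_le_add (deriv_deriv_saturate_le (hy.contDiff s hs) (hy.nonneg s hs) hε x)
          (reaction_saturate_le_reaction_div (hf x) hε (hy.nonneg s hs x))
    _ ≤ _ := by
        rw [← add_div]
        have := hpos s hs x
        gcongr
        exact hy.le_deriv s hs x

end IsNonnegSupersolutionOn

/-! ### Cutoffs and Green's identity -/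

theorem continuous_deriv_deriv {g : ℝ → ℝ} (hg : ContDiff ℝ 2 g) : Continuous (deriv (deriv g)) :=
  (ContDiff.deriv' hg).continuous_deriv_one

/-- A smooth cutoff at scale `R`: equal to `1` on `[-R, R]` and to `0` off `(-2R, 2R)`. -/
noncomputable def cutoff (R x : ℝ) : ℝ :=
  (⟨1, 2, one_pos, one_lt_two⟩ : ContDiffBump (0 : ℝ)) (R⁻¹ * x)

section Cutoff

variable {R x : ℝ}

theorem contDiff_cutoff (R : ℝ) : ContDiff ℝ 2 (cutoff R) :=
  (ContDiffBump.contDiff _).comp (contDiff_const.mul contDiff_id)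

theorem cutoff_nonneg (R x : ℝ) : 0 ≤ cutoff R x := ContDiffBump.nonneg _

theorem cutoff_le_one (R x : ℝ) : cutoff R x ≤ 1 := ContDiffBump.le_one _

theorem abs_cutoff_mul_le (R x : ℝ) {r B : ℝ} (hr : 0 ≤ r) (hrB : r ≤ B) :
    |cutoff R x * r| ≤ B := by
  rw [abs_of_nonneg (mul_nonneg (cutoff_nonneg R x) hr)]
  exact (mul_le_of_le_one_left hr (cutoff_le_one R x)).trans hrB

theorem cutoff_eq_one (hR : 0 < R) (hx : |x| ≤ R) : cutoff R x = 1 := by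
  refine ContDiffBump.one_of_mem_closedBall _ ?_
  rw [mem_closedBall_zero_iff, Real.norm_eq_abs, abs_mul, abs_of_pos (inv_pos.2 hR)]
  exact inv_mul_le_one_of_le₀ hx hR.le

theorem cutoff_eq_zero (hR : 0 < R) (hx : 2 * R ≤ |x|) : cutoff R x = 0 := by
  refine ContDiffBump.zero_of_le_dist _ ?_
  rw [dist_zero_right, Real.norm_eq_abs, abs_mul, abs_of_pos (inv_pos.2 hR)]
  exact (le_inv_mul_iff₀ hR).2 (by linarith)

theorem hasCompactSupport_cutoff (hR : 0 < R) : HasCompactSupport (cutoff R) :=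
  HasCompactSupport.intro (isCompact_closedBall 0 (2 * R)) fun x hx =>
    cutoff_eq_zero hR (by simpa using (not_le.1 (mt mem_closedBall_zero_iff.2 hx)).le)

theorem deriv_cutoff_eq_zero (hR : 0 < R) (hx : |x| < R) : deriv (cutoff R) x = 0 := by
  have : cutoff R =ᶠ[𝓝 x] fun _ => 1 := by
    filter_upwards [(isOpen_lt continuous_abs continuous_const).mem_nhds hx] with y hy
    exact cutoff_eq_one hR (le_of_lt hy)
  rw [this.deriv_eq, deriv_const]

theorem deriv_cutoff (R x : ℝ) : deriv (cutoff R) x = R⁻¹ * deriv (cutoff 1) (R⁻¹ * x) := by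
  have : cutoff R = fun x => cutoff 1 (R⁻¹ * x) := by simp [cutoff, funext_iff]
  rw [this, deriv_comp_mul_left, smul_eq_mul]

theorem deriv_deriv_cutoff (R x : ℝ) :
    deriv (deriv (cutoff R)) x = (R⁻¹) ^ 2 * deriv (deriv (cutoff 1)) (R⁻¹ * x) := by
  rw [funext (deriv_cutoff R), deriv_const_mul_field, deriv_comp_mul_left, smul_eq_mul]
  ring

theorem integral_abs_deriv_cutoff (hR : 0 < R) :
    ∫ x, |deriv (cutoff R) x| = ∫ x, |deriv (cutoff 1) x| := by
  simp only [deriv_cutoff R, abs_mul, integral_const_mul]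
  rw [Measure.integral_comp_mul_left (fun x => |deriv (cutoff 1) x|), inv_inv, smul_eq_mul,
    abs_of_pos hR, abs_of_pos (inv_pos.2 hR), inv_mul_cancel_left₀ hR.ne']

theorem exists_abs_deriv_deriv_cutoff_le :
    ∃ B, ∀ R x, |deriv (deriv (cutoff R)) x| ≤ (R⁻¹) ^ 2 * B := by
  obtain ⟨B, hB⟩ := (hasCompactSupport_cutoff one_pos).deriv.deriv.exists_bound_of_continuous
    (continuous_deriv_deriv (contDiff_cutoff 1))
  refine ⟨B, fun R x => ?_⟩
  rw [deriv_deriv_cutoff, abs_mul, abs_of_nonneg (by positivity)]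
  gcongr
  exact hB _

theorem tendsto_integral_cutoff_mul {p : ℝ → ℝ} (hp : Integrable p) :
    Tendsto (fun R => ∫ x, cutoff R x * p x) atTop (𝓝 (∫ x, p x)) := by
  refine tendsto_integral_filter_of_dominated_convergence (fun x => |p x|)
    (Eventually.of_forall fun R => (contDiff_cutoff R).continuous.aestronglyMeasurable.mul
      hp.aestronglyMeasurable)
    (Eventually.of_forall fun R => ae_of_all _ fun x => ?_) hp.abs (ae_of_all _ fun x => ?_)
  · rw [norm_mul, Real.norm_of_nonneg (cutoff_nonneg R x)]
    exact mul_le_of_le_one_left (abs_nonneg _) (cutoff_le_one R x)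
  · refine tendsto_const_nhds.congr' ?_
    filter_upwards [eventually_ge_atTop |x|, eventually_gt_atTop 0] with R hx hR
    rw [cutoff_eq_one hR hx, one_mul]

end Cutoff

/-- The commutator `[∂ₓ², χ] p = (χp)'' - χ p''` of the second derivative with multiplication by
`χ`. -/
noncomputable def derivTwoCommutator (χ p : ℝ → ℝ) (x : ℝ) : ℝ :=
  2 * deriv χ x * deriv p x + deriv (deriv χ) x * p x

theorem continuous_derivTwoCommutator {χ p : ℝ → ℝ} (hχ : ContDiff ℝ 2 χ) (hp : ContDiff ℝ 2 p) :
    Continuous (derivTwoCommutator χ p) := by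
  have := hχ.continuous_deriv (by norm_num)
  have := continuous_deriv_deriv hχ
  have := hp.continuous_deriv (by norm_num)
  have := hp.continuous
  unfold derivTwoCommutator
  fun_prop

theorem hasCompactSupport_derivTwoCommutator {χ : ℝ → ℝ} (hχ : HasCompactSupport χ) (p : ℝ → ℝ) :
    HasCompactSupport (derivTwoCommutator χ p) :=
  ((hχ.deriv.mul_left (f := fun _ => 2)).mul_right).add hχ.deriv.deriv.mul_right

theorem integral_mul_sub_eq_integral_derivTwoCommutator_mul {χ p q : ℝ → ℝ} (hχ : ContDiff ℝ 2 χ)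
    (hχc : HasCompactSupport χ) (hp : ContDiff ℝ 2 p) (hq : ContDiff ℝ 2 q) :
    ∫ x, χ x * (p x * deriv (deriv q) x - deriv (deriv p) x * q x) =
      ∫ x, derivTwoCommutator χ p x * q x := by
  have hder : ∀ {g : ℝ → ℝ}, ContDiff ℝ 2 g → ∀ x, HasDerivAt g (deriv g x) x := fun hg x =>
    (hg.differentiable (by norm_num) x).hasDerivAt
  have hder₂ : ∀ {g : ℝ → ℝ}, ContDiff ℝ 2 g → ∀ x, HasDerivAt (deriv g) (deriv (deriv g) x) x :=
    fun hg x => (hg.differentiable_deriv_two x).hasDerivAt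
  have hp' := hp.continuous_deriv (by norm_num)
  have hq' := hq.continuous_deriv (by norm_num)
  have hp'' := continuous_deriv_deriv hp
  have hq'' := continuous_deriv_deriv hq
  have hp₀ := hp.continuous
  have hq₀ := hq.continuous
  have hleft : Integrable fun x => χ x * (p x * deriv (deriv q) x - deriv (deriv p) x * q x) :=
    (hχ.continuous.mul (by fun_prop)).integrable_of_hasCompactSupport hχc.mul_right
  have hright : Integrable fun x => derivTwoCommutator χ p x * q x :=
    ((continuous_derivTwoCommutator hχ hp).mul hq₀).integrable_of_hasCompactSupport
      (hasCompactSupport_derivTwoCommutator hχc p).mul_right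
  have hprim : Integrable fun x =>
      χ x * (p x * deriv q x - deriv p x * q x) - deriv χ x * (p x * q x) :=
    ((hχ.continuous.mul (by fun_prop)).integrable_of_hasCompactSupport hχc.mul_right).sub
      (((hχ.continuous_deriv (by norm_num)).mul (by fun_prop)).integrable_of_hasCompactSupport
        hχc.deriv.mul_right)
  rw [← sub_eq_zero, ← integral_sub hleft hright]
  refine integral_eq_zero_of_hasDerivAt_of_integrable (fun x => ?_) (hleft.sub hright) hprim
  refine (((hder hχ x).fun_mul (((hder hp x).fun_mul (hder₂ hq x)).fun_sub
    ((hder₂ hp x).fun_mul (hder hq x)))).fun_sub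
    ((hder₂ hχ x).fun_mul ((hder hp x).fun_mul (hder hq x)))).congr_deriv ?_
  rw [derivTwoCommutator]
  ring

theorem tendsto_setIntegral_abs_ge {G : ℝ → ℝ} (hG : Integrable G) :
    Tendsto (fun R => ∫ y in {y | R ≤ |y|}, G y) atTop (𝓝 0) := by
  have hempty : ⋂ R : ℝ, {y : ℝ | R ≤ |y|} = ∅ :=
    eq_empty_of_forall_notMem fun y hy => (lt_add_one |y|).not_ge (mem_iInter.1 hy (|y| + 1))
  simpa [hempty] using tendsto_setIntegral_of_antitone (μ := volume) (f := G)
    (s := fun R : ℝ => {y : ℝ | R ≤ |y|})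
    (fun R => measurableSet_le measurable_const measurable_norm)
    (fun R S hRS y (hy : S ≤ |y|) => hRS.trans hy) ⟨0, hG.integrableOn⟩

theorem abs_le_setIntegral_of_abs_deriv_le {p G : ℝ → ℝ} (hp : ContDiff ℝ 1 p) (hG : Integrable G)
    (hpG : ∀ x, |deriv p x| ≤ G x) (hlim : Tendsto p (cocompact ℝ) (𝓝 0)) {R x : ℝ}
    (hx : R ≤ |x|) : |p x| ≤ ∫ y in {y | R ≤ |y|}, G y := by
  have hder : ∀ y, HasDerivAt p (deriv p y) y := fun y =>
    (hp.differentiable one_ne_zero y).hasDerivAt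
  have hint : Integrable (deriv p) :=
    hG.mono' hp.continuous_deriv_one.aestronglyMeasurable (ae_of_all _ hpG)
  rw [cocompact_eq_atBot_atTop, tendsto_sup] at hlim
  have hle : ∀ S ⊆ {y : ℝ | R ≤ |y|}, |∫ y in S, deriv p y| ≤ ∫ y in {y | R ≤ |y|}, G y :=
    fun S hS => (norm_integral_le_of_norm_le (f := deriv p) hG.integrableOn (ae_of_all _ hpG)).trans
      (setIntegral_mono_set hG.integrableOn
        (ae_of_all _ fun y => (abs_nonneg _).trans (hpG y)) hS.eventuallyLE)
  rcases le_abs.1 hx with h | h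
  · have := hle (Ioi x) fun y (hy : x < y) => (h.trans hy.le).trans (le_abs_self y)
    rwa [integral_Ioi_of_hasDerivAt_of_tendsto' (fun y _ => hder y) hint.integrableOn hlim.2,
      zero_sub, abs_neg] at this
  · have := hle (Iic x) fun y hy => (h.trans (neg_le_neg hy)).trans (neg_le_abs y)
    rwa [integral_Iic_of_hasDerivAt_of_tendsto' (fun y _ => hder y) hint.integrableOn hlim.1,
      sub_zero] at this

/-! ### The adjoint equation -/

/-- `m` is a nonnegative solution of the adjoint equation `m_s = -m_xx + 2 f m` at the times in `I`,
dominated together with `m_s` by the integrable function `g`, with `m_x → 0` at infinity. Reversing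
time, `m s = w (t - s)`, turns a solution `w` of the linearized equation into such an `m`. -/
structure IsDominatedAdjointSolutionOn (f : ℝ → ℝ) (g : ℝ → ℝ) (m : ℝ → ℝ → ℝ) (I : Set ℝ) :
    Prop where
  integrable_bound : Integrable g
  nonneg : ∀ s ∈ I, ∀ x, 0 ≤ m s x
  contDiff : ∀ s ∈ I, ContDiff ℝ 2 (m s)
  hasDerivAt : ∀ s ∈ I, ∀ x,
    HasDerivAt (fun r => m r x) (2 * f x * m s x - deriv (deriv (m s)) x) s
  le_bound : ∀ s ∈ I, ∀ x, m s x ≤ g x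
  abs_deriv_le : ∀ s ∈ I, ∀ x, |deriv (fun r => m r x) s| ≤ g x
  tendsto_deriv : ∀ s ∈ I, Tendsto (deriv (m s)) (cocompact ℝ) (𝓝 0)

namespace IsDominatedAdjointSolutionOn

variable {f g : ℝ → ℝ} {m : ℝ → ℝ → ℝ} {I J : Set ℝ}

theorem mono (hm : IsDominatedAdjointSolutionOn f g m J) (hIJ : I ⊆ J) :
    IsDominatedAdjointSolutionOn f g m I where
  integrable_bound := hm.integrable_bound
  nonneg s hs := hm.nonneg s (hIJ hs)
  contDiff s hs := hm.contDiff s (hIJ hs)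
  hasDerivAt s hs := hm.hasDerivAt s (hIJ hs)
  le_bound s hs := hm.le_bound s (hIJ hs)
  abs_deriv_le s hs := hm.abs_deriv_le s (hIJ hs)
  tendsto_deriv s hs := hm.tendsto_deriv s (hIJ hs)

theorem abs_sub_le (hm : IsDominatedAdjointSolutionOn f g m I) (hI : Convex ℝ I) {r s : ℝ}
    (hr : r ∈ I) (hs : s ∈ I) (x : ℝ) : |m r x - m s x| ≤ g x * |r - s| :=
  hI.norm_image_sub_le_of_norm_hasDerivWithin_le (f := fun r => m r x)
    (fun r hr => (hm.hasDerivAt r hr x).differentiableAt.hasDerivAt.hasDerivWithinAt)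
    (fun r hr => hm.abs_deriv_le r hr x) hs hr

theorem norm_mul_le (hm : IsDominatedAdjointSolutionOn f g m I) {s x c B : ℝ} (hs : s ∈ I)
    (hc : |c| ≤ B) : ‖m s x * c‖ ≤ g x * B := by
  rw [norm_mul, Real.norm_of_nonneg (hm.nonneg s hs x)]
  exact mul_le_mul (hm.le_bound s hs x) hc (abs_nonneg c)
    ((hm.nonneg s hs x).trans (hm.le_bound s hs x))

theorem integrable_mul (hm : IsDominatedAdjointSolutionOn f g m I) {s B : ℝ} (hs : s ∈ I)
    {ζ : ℝ → ℝ} (hζ : Continuous ζ) (hζB : ∀ x, |ζ x| ≤ B) : Integrable fun x => m s x * ζ x :=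
  (hm.integrable_bound.mul_const B).mono'
    ((hm.contDiff s hs).continuous.mul hζ).aestronglyMeasurable
    (ae_of_all _ fun x => hm.norm_mul_le hs (hζB x))

theorem integrable (hm : IsDominatedAdjointSolutionOn f g m I) {s : ℝ} (hs : s ∈ I) :
    Integrable (m s) := by
  simpa using hm.integrable_mul hs continuous_one (B := 1) (by simp)

theorem abs_integral_mul_le (hm : IsDominatedAdjointSolutionOn f g m I) {s B : ℝ} (hs : s ∈ I)
    {ζ : ℝ → ℝ} (hζB : ∀ x, |ζ x| ≤ B) : |∫ x, m s x * ζ x| ≤ (∫ x, g x) * B := by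
  rw [← integral_mul_const]
  exact norm_integral_le_of_norm_le (hm.integrable_bound.mul_const B)
    (ae_of_all _ fun x => hm.norm_mul_le hs (hζB x))

theorem continuousOn_integral_mul (hm : IsDominatedAdjointSolutionOn f g m I) {ζ : ℝ → ℝ → ℝ}
    {B : ℝ} (hζx : ∀ s ∈ I, Continuous (ζ s)) (hζs : ∀ x, ContinuousOn (fun s => ζ s x) I)
    (hζB : ∀ s ∈ I, ∀ x, |ζ s x| ≤ B) : ContinuousOn (fun s => ∫ x, m s x * ζ s x) I :=
  continuousOn_of_dominated
    (fun s hs => ((hm.contDiff s hs).continuous.mul (hζx s hs)).aestronglyMeasurable)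
    (fun s hs => ae_of_all _ fun x => hm.norm_mul_le hs (hζB s hs x))
    (hm.integrable_bound.mul_const B)
    (ae_of_all _ fun x => ContinuousOn.mul
      (fun s hs => (hm.hasDerivAt s hs x).continuousAt.continuousWithinAt) (hζs x))

theorem continuousOn_integral (hm : IsDominatedAdjointSolutionOn f g m I) :
    ContinuousOn (fun s => ∫ x, m s x) I := by
  simpa using hm.continuousOn_integral_mul (ζ := fun _ _ => 1) (B := 1)
    (fun _ _ => continuous_const) (fun _ => continuousOn_const) (by simp)

theorem abs_deriv_deriv_le (hm : IsDominatedAdjointSolutionOn f g m I) {F : ℝ}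
    (hfF : ∀ x, |f x| ≤ F) {s : ℝ} (hs : s ∈ I) (x : ℝ) :
    |deriv (deriv (m s)) x| ≤ (1 + 2 * F) * g x := by
  have hdecomp : deriv (deriv (m s)) x = 2 * f x * m s x - deriv (fun r => m r x) s := by
    rw [(hm.hasDerivAt s hs x).deriv]
    ring
  have hfm : |f x * m s x| ≤ F * g x := by
    rw [mul_comm, mul_comm F]
    exact hm.norm_mul_le hs (hfF x)
  calc |deriv (deriv (m s)) x| ≤ |2 * f x * m s x| + |deriv (fun r => m r x) s| :=
        hdecomp ▸ abs_sub _ _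
    _ = 2 * |f x * m s x| + |deriv (fun r => m r x) s| := by
        rw [mul_assoc, abs_mul, abs_two]
    _ ≤ (1 + 2 * F) * g x := by linarith [hm.abs_deriv_le s hs x]

theorem exists_integral_abs_derivTwoCommutator_cutoff_le
    (hm : IsDominatedAdjointSolutionOn f g m I) {F : ℝ} (hfF : ∀ x, |f x| ≤ F) :
    ∃ E : ℝ → ℝ, Tendsto E atTop (𝓝 0) ∧
      ∀ R > 0, ∀ s ∈ I, ∫ x, |derivTwoCommutator (cutoff R) (m s) x| ≤ E R := by
  obtain ⟨B, hB⟩ := exists_abs_deriv_deriv_cutoff_le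
  let G : ℝ → ℝ := fun x => (1 + 2 * F) * g x
  have hG : Integrable G := hm.integrable_bound.const_mul _
  let τ : ℝ → ℝ := fun R => ∫ y in {y | R ≤ |y|}, G y
  refine ⟨fun R => 2 * τ R * (∫ x, |deriv (cutoff 1) x|) + R⁻¹ ^ 2 * B * ∫ x, g x, ?_,
    fun R hR s hs => ?_⟩
  · simpa using ((((tendsto_setIntegral_abs_ge hG).const_mul 2).mul_const _).add
      (((tendsto_inv_atTop_zero.pow 2).mul_const B).mul_const _))
  have hχ : Integrable fun x => |deriv (cutoff R) x| :=
    (((contDiff_cutoff R).continuous_deriv (by norm_num)).integrable_of_hasCompactSupport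
      (hasCompactSupport_cutoff hR).deriv).abs
  have hfirst : ∀ x, |2 * deriv (cutoff R) x * deriv (m s) x| ≤ 2 * τ R * |deriv (cutoff R) x| := by
    intro x
    rcases lt_or_ge |x| R with hx | hx
    · simp [deriv_cutoff_eq_zero hR hx]
    · rw [abs_mul, abs_mul, abs_two, mul_right_comm]
      gcongr
      exact abs_le_setIntegral_of_abs_deriv_le (ContDiff.deriv' (hm.contDiff s hs)) hG
        (hm.abs_deriv_deriv_le hfF hs) (hm.tendsto_deriv s hs) hx
  have hsecond : ∀ x, |deriv (deriv (cutoff R)) x * m s x| ≤ R⁻¹ ^ 2 * B * g x := fun x => by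
    rw [mul_comm, mul_comm _ (g x)]
    exact hm.norm_mul_le hs (hB R x)
  calc ∫ x, |derivTwoCommutator (cutoff R) (m s) x|
      ≤ ∫ x, (2 * τ R * |deriv (cutoff R) x| + R⁻¹ ^ 2 * B * g x) :=
        integral_mono_of_nonneg (ae_of_all _ fun x => abs_nonneg _)
          ((hχ.const_mul _).add (hm.integrable_bound.const_mul _))
          (ae_of_all _ fun x => (abs_add_le _ _).trans (add_le_add (hfirst x) (hsecond x)))
    _ = _ := by
        rw [integral_add (hχ.const_mul _) (hm.integrable_bound.const_mul _), integral_const_mul,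
          integral_const_mul, integral_abs_deriv_cutoff hR]

end IsDominatedAdjointSolutionOn

theorem neg_le_reaction {f : ℝ → ℝ} {x r F K : ℝ} (hf : |f x| ≤ F) (hr : 0 ≤ r) (hrK : r ≤ K) :
    -(2 * F * K) ≤ reaction f x r := by
  have : f x * r ≤ F * K :=
    mul_le_mul ((le_abs_self _).trans hf) hrK hr ((abs_nonneg _).trans hf)
  rw [reaction]
  linarith [sq_nonneg r]

section Pairing

variable {f g : ℝ → ℝ} {m z : ℝ → ℝ → ℝ} {a b K F R : ℝ}

theorem integral_cutoff_mul_sub_add_sq (hR : 0 < R) {p q : ℝ → ℝ} (hp : ContDiff ℝ 2 p)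
    (hq : ContDiff ℝ 2 q) :
    Integrable (fun x => cutoff R x * (p x * deriv (deriv q) x - deriv (deriv p) x * q x)
        + p x * (cutoff R x * q x ^ 2)) ∧
      ∫ x, (cutoff R x * (p x * deriv (deriv q) x - deriv (deriv p) x * q x)
        + p x * (cutoff R x * q x ^ 2)) =
      (∫ x, p x * (cutoff R x * q x ^ 2)) + ∫ x, derivTwoCommutator (cutoff R) p x * q x := by
  have hp₀ := hp.continuous
  have hq₀ := hq.continuous
  have hp'' := continuous_deriv_deriv hp
  have hq'' := continuous_deriv_deriv hq
  have hχ := (contDiff_cutoff R).continuous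
  have hχc := hasCompactSupport_cutoff hR
  have hgreen : Integrable fun x =>
      cutoff R x * (p x * deriv (deriv q) x - deriv (deriv p) x * q x) :=
    (hχ.mul (by fun_prop)).integrable_of_hasCompactSupport hχc.mul_right
  have hsq : Integrable fun x => p x * (cutoff R x * q x ^ 2) :=
    (hp₀.mul (hχ.mul (by fun_prop))).integrable_of_hasCompactSupport hχc.mul_right.mul_left
  refine ⟨hgreen.add hsq, ?_⟩
  rw [integral_add hgreen hsq, add_comm, integral_mul_sub_eq_integral_derivTwoCommutator_mul
    (contDiff_cutoff R) hχc hp hq]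

variable (hm : IsDominatedAdjointSolutionOn f g m (Icc a b))
  (hz : IsNonnegSupersolutionOn (reaction f) z (Icc a b)) (hzK : ∀ s ∈ Icc a b, ∀ x, z s x ≤ K)

include hm hz hzK

theorem neg_mul_le_mul_cutoff_mul_sub {C : ℝ} (hR : 0 < R) {r s : ℝ} (hs : s ∈ Icc a b)
    (hr : r ∈ Icc a b) (hsr : s ≤ r) (hC : 0 ≤ C)
    (hlow : ∀ x, |x| ≤ 2 * R → z s x - C * (r - s) ≤ z r x) (x : ℝ) :
    -((r - s) * (g x * (K + C))) ≤
      m r x * (cutoff R x * z r x) - m s x * (cutoff R x * z s x) := by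
  have hg : 0 ≤ g x := (hm.nonneg s hs x).trans (hm.le_bound s hs x)
  have hm_incr : -(g x * (r - s) * K) ≤ (m r x - m s x) * (cutoff R x * z r x) := by
    refine (abs_le.1 ?_).1
    rw [abs_mul, ← abs_of_nonneg (sub_nonneg.2 hsr)]
    exact mul_le_mul (hm.abs_sub_le (convex_Icc a b) hr hs x)
      (abs_cutoff_mul_le R x (hz.nonneg r hr x) (hzK r hr x)) (abs_nonneg _)
      (mul_nonneg hg (abs_nonneg _))
  have hz_incr : -(C * (r - s)) ≤ cutoff R x * (z r x - z s x) := by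
    have hCr : 0 ≤ C * (r - s) := mul_nonneg hC (sub_nonneg.2 hsr)
    rcases le_total |x| (2 * R) with hx | hx
    · nlinarith [hlow x hx, cutoff_nonneg R x, cutoff_le_one R x]
    · rwa [cutoff_eq_zero hR hx, zero_mul, neg_nonpos]
  have hmz_incr : -(g x * (C * (r - s))) ≤ m s x * (cutoff R x * (z r x - z s x)) := by
    nlinarith [hm.nonneg s hs x, hm.le_bound s hs x, mul_nonneg hC (sub_nonneg.2 hsr)]
  linarith

theorem eventually_lt_slope_integral_mul_cutoff_mul (hfF : ∀ x, |f x| ≤ F) (hR : 0 < R) {s c : ℝ}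
    (hs : s ∈ Ioo a b)
    (hc : c < (∫ x, m s x * (cutoff R x * z s x ^ 2))
      + ∫ x, derivTwoCommutator (cutoff R) (m s) x * z s x) :
    ∀ᶠ r in 𝓝[>] s, c < slope (fun r => ∫ x, m r x * (cutoff R x * z r x)) s r := by
  have hsI : s ∈ Icc a b := Ioo_subset_Icc_self hs
  have hsub : Icc s b ⊆ Icc a b := Icc_subset_Icc_left hs.1.le
  obtain ⟨hL, hL_eq⟩ := integral_cutoff_mul_sub_add_sq hR (hm.contDiff s hsI) (hz.contDiff s hsI)
  have hF : 0 ≤ F := (abs_nonneg _).trans (hfF 0)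
  have hK : 0 ≤ K := (hz.nonneg s hsI 0).trans (hzK s hsI 0)
  obtain ⟨C, hC, hlow⟩ := (hz.mono hsub).exists_lower_bound (R := 2 * R) (by positivity) hs.2.le
    (M := 2 * F * K) (by positivity)
    fun r hr x => neg_le_reaction (hfF x) (hz.nonneg r (hsub hr) x) (hzK r (hsub hr) x)
  refine eventually_lt_slope_integral hs.2 (fun r hr => ?_)
    (fun x => (hm.hasDerivAt s hsI x).fun_mul
      ((hz.differentiableAt s hsI x).hasDerivAt.const_mul (cutoff R x)))
    hL (fun x => ?_) (hm.integrable_bound.mul_const (K + C))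
    (fun r hr => neg_mul_le_mul_cutoff_mul_sub hm hz hzK hR hsI
      (hsub (Ioo_subset_Icc_self hr)) hr.1.le hC (hlow r (Ioo_subset_Icc_self hr))) (hL_eq ▸ hc)
  · have hr' : r ∈ Icc a b := hsub (Ico_subset_Icc_self hr)
    exact hm.integrable_mul hr' ((contDiff_cutoff R).continuous.mul (hz.contDiff r hr').continuous)
      fun x => abs_cutoff_mul_le R x (hz.nonneg r hr' x) (hzK r hr' x)
  · have := mul_le_mul_of_nonneg_left (hz.le_deriv s hsI x)
      (mul_nonneg (hm.nonneg s hsI x) (cutoff_nonneg R x))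
    rw [reaction] at this
    linarith

theorem continuousOn_integral_mul_cutoff_mul (R : ℝ) :
    ContinuousOn (fun s => ∫ x, m s x * (cutoff R x * z s x)) (Icc a b) :=
  hm.continuousOn_integral_mul
    (fun s hs => (contDiff_cutoff R).continuous.mul (hz.contDiff s hs).continuous)
    (fun x => continuousOn_const.mul (hz.continuousOn x))
    fun s hs x => abs_cutoff_mul_le R x (hz.nonneg s hs x) (hzK s hs x)

theorem continuousOn_integral_mul_cutoff_mul_sq (R : ℝ) :
    ContinuousOn (fun s => ∫ x, m s x * (cutoff R x * z s x ^ 2)) (Icc a b) :=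
  hm.continuousOn_integral_mul
    (fun s hs => (contDiff_cutoff R).continuous.mul ((hz.contDiff s hs).continuous.pow 2))
    (fun x => continuousOn_const.mul ((hz.continuousOn x).pow 2))
    fun s hs x => abs_cutoff_mul_le R x (sq_nonneg _)
      (pow_le_pow_left₀ (hz.nonneg s hs x) (hzK s hs x) 2)

theorem integral_mul_cutoff_mul_add_integral_le (hfF : ∀ x, |f x| ≤ F) (hab : a ≤ b) (hR : 0 < R)
    {E : ℝ} (hE : ∀ s ∈ Icc a b, ∫ x, |derivTwoCommutator (cutoff R) (m s) x| ≤ E) :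
    (∫ x, m a x * (cutoff R x * z a x))
        + ∫ s in a..b, ((∫ x, m s x * (cutoff R x * z s x ^ 2)) - E * K) ≤
      ∫ x, m b x * (cutoff R x * z b x) := by
  refine add_integral_le_of_eventually_lt_slope hab
    (continuousOn_integral_mul_cutoff_mul hm hz hzK R)
    ((continuousOn_integral_mul_cutoff_mul_sq hm hz hzK R).sub continuousOn_const)
    fun s hs c hc => eventually_lt_slope_integral_mul_cutoff_mul hm hz hzK hfF hR hs
      (hc.trans_le ?_)
  have hsI : s ∈ Icc a b := Ioo_subset_Icc_self hs
  have hK : 0 ≤ K := (hz.nonneg s hsI 0).trans (hzK s hsI 0)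
  have hcomm : Integrable fun x => |derivTwoCommutator (cutoff R) (m s) x| :=
    ((continuous_derivTwoCommutator (contDiff_cutoff R)
      (hm.contDiff s hsI)).integrable_of_hasCompactSupport
      (hasCompactSupport_derivTwoCommutator (hasCompactSupport_cutoff hR) _)).abs
  have hle : |∫ x, derivTwoCommutator (cutoff R) (m s) x * z s x| ≤ E * K := by
    refine (norm_integral_le_of_norm_le
      (f := fun x => derivTwoCommutator (cutoff R) (m s) x * z s x)
      (hcomm.mul_const K) (ae_of_all _ fun x => ?_)).trans ?_
    · rw [norm_mul, Real.norm_of_nonneg (hz.nonneg s hsI x)]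
      exact mul_le_mul_of_nonneg_left (hzK s hsI x) (abs_nonneg _)
    · rw [integral_mul_const]
      exact mul_le_mul_of_nonneg_right (hE s hsI) hK
  linarith [(abs_le.1 hle).1]

theorem integral_mul_add_integral_mul_sq_le (hfF : ∀ x, |f x| ≤ F) (hab : a ≤ b) :
    (∫ x, m a x * z a x) + ∫ s in a..b, ∫ x, m s x * z s x ^ 2 ≤ ∫ x, m b x * z b x := by
  have hzsq : ∀ s ∈ Icc a b, ∀ x, z s x ^ 2 ≤ K ^ 2 := fun s hs x =>
    pow_le_pow_left₀ (hz.nonneg s hs x) (hzK s hs x) 2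
  obtain ⟨E, hE_tendsto, hE⟩ := hm.exists_integral_abs_derivTwoCommutator_cutoff_le hfF
  have hlim : ∀ s ∈ Icc a b, Tendsto (fun R => ∫ x, m s x * (cutoff R x * z s x)) atTop
      (𝓝 (∫ x, m s x * z s x)) := fun s hs => by
    simpa only [mul_left_comm] using tendsto_integral_cutoff_mul
      (hm.integrable_mul hs (hz.contDiff s hs).continuous
        fun x => abs_le.2 ⟨by linarith [hz.nonneg s hs x, hzK s hs x], hzK s hs x⟩)
  have hlim_sq : ∀ s ∈ Icc a b, Tendsto
      (fun R => (∫ x, m s x * (cutoff R x * z s x ^ 2)) - E R * K) atTop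
      (𝓝 (∫ x, m s x * z s x ^ 2)) := fun s hs => by
    simpa [mul_left_comm] using (tendsto_integral_cutoff_mul
      (hm.integrable_mul hs ((hz.contDiff s hs).continuous.pow 2) (B := K ^ 2)
        fun x => by simpa using hzsq s hs x)).sub (hE_tendsto.mul_const K)
  have huIoc : uIoc a b ⊆ Icc a b := (uIoc_of_le hab).trans_subset Ioc_subset_Icc_self
  have hlim_int : Tendsto
      (fun R => ∫ s in a..b, ((∫ x, m s x * (cutoff R x * z s x ^ 2)) - E R * K)) atTop
      (𝓝 (∫ s in a..b, ∫ x, m s x * z s x ^ 2)) := by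
    refine intervalIntegral.tendsto_integral_filter_of_dominated_convergence
      (fun _ => (∫ x, g x) * K ^ 2 + |K|) (.of_forall fun R => ?_) ?_ (by simp)
      (ae_of_all _ fun s hs => hlim_sq s (huIoc hs))
    · exact ((continuousOn_integral_mul_cutoff_mul_sq hm hz hzK R).sub
        continuousOn_const).mono huIoc |>.aestronglyMeasurable measurableSet_uIoc
    · filter_upwards [hE_tendsto.abs.eventually_le_const (u := 1) (by simp)] with R hER
      refine ae_of_all _ fun s hs => (norm_sub_le _ _).trans (add_le_add ?_ ?_)
      · exact hm.abs_integral_mul_le (huIoc hs) fun x =>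
          abs_cutoff_mul_le R x (sq_nonneg _) (hzsq s (huIoc hs) x)
      · rw [Real.norm_eq_abs, abs_mul]
        exact mul_le_of_le_one_left (abs_nonneg K) hER
  refine le_of_tendsto_of_tendsto ((hlim a (left_mem_Icc.2 hab)).add hlim_int)
    (hlim b (right_mem_Icc.2 hab)) ?_
  filter_upwards [eventually_gt_atTop 0] with R hR
  exact integral_mul_cutoff_mul_add_integral_le hm hz hzK hfF hab hR (hE R hR)

end Pairing

/-! ### The Riccati inequality -/

theorem sq_integral_mul_le {X : Type*} [MeasurableSpace X] {μ : Measure X} {m z : X → ℝ}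
    (hm : ∀ x, 0 ≤ m x) (hm_int : Integrable m μ) (hmz : Integrable (fun x => m x * z x) μ)
    (hmz_sq : Integrable (fun x => m x * z x ^ 2) μ) :
    (∫ x, m x * z x ∂μ) ^ 2 ≤ (∫ x, m x ∂μ) * ∫ x, m x * z x ^ 2 ∂μ := by
  have hquad : ∀ c : ℝ, 0 ≤ (∫ x, m x ∂μ) * (c * c) + -2 * (∫ x, m x * z x ∂μ) * c
      + ∫ x, m x * z x ^ 2 ∂μ := fun c => calc
    0 ≤ ∫ x, m x * (c - z x) ^ 2 ∂μ := integral_nonneg fun x => mul_nonneg (hm x) (sq_nonneg _)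
    _ = ∫ x, (m x * (c * c) + m x * z x * (-2 * c) + m x * z x ^ 2) ∂μ := by
        congr with x
        ring
    _ = _ := by
        rw [integral_add (by exact (hm_int.mul_const _).add (hmz.mul_const _)) hmz_sq,
          integral_add (hm_int.mul_const _) (hmz.mul_const _), integral_mul_const,
          integral_mul_const]
        ring
  have hdiscrim := discrim_le_zero hquad
  rw [discrim] at hdiscrim
  linarith

theorem mul_integral_le_one_of_riccati {Ψ l : ℝ → ℝ} {a b : ℝ} (hab : a ≤ b)
    (hΨ : ContinuousOn Ψ (Icc a b)) (hl : ContinuousOn l (Icc a b))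
    (hl_nonneg : ∀ s ∈ Icc a b, 0 ≤ l s)
    (h : ∀ s ∈ Icc a b, Ψ a + ∫ σ in a..s, l σ * Ψ σ ^ 2 ≤ Ψ s) :
    Ψ a * ∫ s in a..b, l s ≤ 1 := by
  have hl_int : 0 ≤ ∫ s in a..b, l s := intervalIntegral.integral_nonneg hab hl_nonneg
  rcases le_or_gt (Ψ a) 0 with hΨa | hΨa
  · exact (mul_nonpos_of_nonpos_of_nonneg hΨa hl_int).trans zero_le_one
  have hlΨ : ContinuousOn (fun σ => l σ * Ψ σ ^ 2) (Icc a b) := hl.mul (hΨ.pow 2)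
  let Y : ℝ → ℝ := fun s => Ψ a + ∫ σ in a..s, l σ * Ψ σ ^ 2
  have hY_pos : ∀ s ∈ Icc a b, 0 < Y s := fun s hs =>
    add_pos_of_pos_of_nonneg hΨa (intervalIntegral.integral_nonneg hs.1 fun σ hσ =>
      mul_nonneg (hl_nonneg σ ⟨hσ.1, hσ.2.trans hs.2⟩) (sq_nonneg _))
  have hY : ContinuousOn Y (Icc a b) :=
    continuousOn_const.add (continuousOn_integral_of_integrableOn_Icc hlΨ.integrableOn_Icc)
  have hY_inv : -(Y a)⁻¹ + ∫ s in a..b, l s ≤ -(Y b)⁻¹ := by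
    refine add_integral_le_of_eventually_lt_slope (Φ := fun s => -(Y s)⁻¹) hab
      (hY.inv₀ fun s hs => (hY_pos s hs).ne').neg hl fun s hs c hc => ?_
    have hsI : s ∈ Icc a b := Ioo_subset_Icc_self hs
    have hderiv : HasDerivAt (fun s => -(Y s)⁻¹) (-(-(l s * Ψ s ^ 2) / Y s ^ 2)) s :=
      (((hasDerivAt_integral_of_continuousOn_Icc hlΨ hs).const_add (Ψ a)).fun_inv
        (hY_pos s hsI).ne').fun_neg
    have hle : l s ≤ -(-(l s * Ψ s ^ 2) / Y s ^ 2) := by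
      rw [neg_div, neg_neg, le_div_iff₀ (pow_pos (hY_pos s hsI) 2)]
      exact mul_le_mul_of_nonneg_left (pow_le_pow_left₀ (hY_pos s hsI).le (h s hsI) 2)
        (hl_nonneg s hsI)
    exact ((hasDerivAt_iff_tendsto_slope.1 hderiv).mono_left
      (nhdsWithin_mono s fun r (hr : s < r) => hr.ne')).eventually_const_lt (hc.trans_le hle)
  have hYa : Y a = Ψ a := by simp [Y]
  have hYb : 0 < (Y b)⁻¹ := inv_pos.2 (hY_pos b (right_mem_Icc.2 hab))
  rw [mul_comm, ← le_div_iff₀ hΨa, one_div, ← hYa]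
  linarith

theorem le_inv_integral_of_forall_mul_le_one {l : ℝ → ℝ} {a t P : ℝ} (hat : a < t)
    (hl : ContinuousOn l (Ico a t)) (hl_pos : ∀ s ∈ Ico a t, 0 < l s)
    (h : ∀ b ∈ Ico a t, P * ∫ s in a..b, l s ≤ 1) : P ≤ (∫ s in a..t, l s)⁻¹ := by
  rcases le_or_gt P 0 with hP | hP
  · refine hP.trans (inv_nonneg.2 ?_)
    rw [intervalIntegral.integral_of_le hat.le, integral_Ioc_eq_integral_Ioo]
    exact setIntegral_nonneg measurableSet_Ioo fun s hs => (hl_pos s (Ioo_subset_Ico_self hs)).le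
  obtain ⟨b, -, hb, hb_lim⟩ := exists_seq_strictMono_tendsto' hat
  have hbI : ∀ n, b n ∈ Ico a t := fun n => Ioo_subset_Ico_self (hb n)
  have hl_norm : ∀ n, ∫ s in Ioc a (b n), ‖l s‖ ≤ P⁻¹ := fun n => by
    rw [setIntegral_congr_fun measurableSet_Ioc fun s hs =>
      Real.norm_of_nonneg (hl_pos s ⟨hs.1.le, hs.2.trans_lt (hb n).2⟩).le,
      ← intervalIntegral.integral_of_le (hb n).1.le, ← one_div, le_div_iff₀ hP, mul_comm]
    exact h _ (hbI n)
  have hl_int : IntegrableOn l (Ioc a t) :=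
    integrableOn_Ioc_of_intervalIntegral_norm_bounded_right
      (fun n => ((hl.mono (Icc_subset_Ico_right (hb n).2)).integrableOn_Icc).mono_set
        Ioc_subset_Icc_self) hb_lim (.of_forall hl_norm)
  have hprim : ContinuousOn (fun r => ∫ s in a..r, l s) (Icc a t) :=
    continuousOn_integral_of_integrableOn_Icc
      (integrableOn_Icc_iff_integrableOn_Ioc (by simp) |>.2 hl_int)
  have hlim : Tendsto (fun n => P * ∫ s in a..b n, l s) atTop (𝓝 (P * ∫ s in a..t, l s)) :=
    ((hprim t (right_mem_Icc.2 hat.le)).tendsto.comp (tendsto_nhdsWithin_iff.2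
      ⟨hb_lim, .of_forall fun n => Ioo_subset_Icc_self (hb n)⟩)).const_mul P
  have hpos : 0 < ∫ s in a..t, l s := intervalIntegral.intervalIntegral_pos_of_pos_on
    ((intervalIntegrable_iff_integrableOn_Ioc_of_le hat.le).2 hl_int)
    (fun s hs => hl_pos s (Ioo_subset_Ico_self hs)) hat
  rw [← one_div, le_div_iff₀ hpos]
  exact le_of_tendsto' hlim fun n => h _ (hbI n)

theorem IsDominatedAdjointSolutionOn.integral_mul_mul_integral_inv_le_one
    {f g : ℝ → ℝ} {m z : ℝ → ℝ → ℝ} {a b K F : ℝ}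
    (hm : IsDominatedAdjointSolutionOn f g m (Icc a b))
    (hm_pos : ∀ s ∈ Icc a b, 0 < ∫ x, m s x)
    (hz : IsNonnegSupersolutionOn (reaction f) z (Icc a b)) (hzK : ∀ s ∈ Icc a b, ∀ x, z s x ≤ K)
    (hfF : ∀ x, |f x| ≤ F) (hab : a ≤ b) :
    (∫ x, m a x * z a x) * ∫ s in a..b, (∫ x, m s x)⁻¹ ≤ 1 := by
  have hz_abs : ∀ s ∈ Icc a b, ∀ x, |z s x| ≤ K := fun s hs x => by
    rw [abs_of_nonneg (hz.nonneg s hs x)]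
    exact hzK s hs x
  have hzsq_abs : ∀ s ∈ Icc a b, ∀ x, |z s x ^ 2| ≤ K ^ 2 := fun s hs x => by
    rw [abs_pow]
    exact pow_le_pow_left₀ (abs_nonneg _) (hz_abs s hs x) 2
  have hΨ : ContinuousOn (fun s => ∫ x, m s x * z s x) (Icc a b) :=
    hm.continuousOn_integral_mul (fun s hs => (hz.contDiff s hs).continuous) hz.continuousOn hz_abs
  have hΨsq : ContinuousOn (fun s => ∫ x, m s x * z s x ^ 2) (Icc a b) :=
    hm.continuousOn_integral_mul (fun s hs => (hz.contDiff s hs).continuous.pow 2)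
      (fun x => (hz.continuousOn x).pow 2) hzsq_abs
  have hl : ContinuousOn (fun s => (∫ x, m s x)⁻¹) (Icc a b) :=
    hm.continuousOn_integral.inv₀ fun s hs => (hm_pos s hs).ne'
  have hcauchy : ∀ s ∈ Icc a b,
      (∫ x, m s x)⁻¹ * (∫ x, m s x * z s x) ^ 2 ≤ ∫ x, m s x * z s x ^ 2 := fun s hs => by
    rw [inv_mul_le_iff₀ (hm_pos s hs)]
    exact sq_integral_mul_le (hm.nonneg s hs) (hm.integrable hs)
      (hm.integrable_mul hs (hz.contDiff s hs).continuous (hz_abs s hs))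
      (hm.integrable_mul hs ((hz.contDiff s hs).continuous.pow 2) (hzsq_abs s hs))
  refine mul_integral_le_one_of_riccati hab hΨ hl (fun s hs => (inv_pos.2 (hm_pos s hs)).le)
    fun s hs => ?_
  have hsub : Icc a s ⊆ Icc a b := Icc_subset_Icc_right hs.2
  calc _ ≤ (∫ x, m a x * z a x) + ∫ σ in a..s, ∫ x, m σ x * z σ x ^ 2 := by
        gcongr
        exact intervalIntegral.integral_mono_on hs.1
          (((hl.mul (hΨ.pow 2)).mono hsub).intervalIntegrable_of_Icc hs.1)
          ((hΨsq.mono hsub).intervalIntegrable_of_Icc hs.1) fun σ hσ => hcauchy σ (hsub hσ)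
    _ ≤ _ := integral_mul_add_integral_mul_sq_le (hm.mono hsub) (hz.mono hsub)
        (fun σ hσ => hzK σ (hsub hσ)) hfF hs.1

theorem IsDominatedAdjointSolutionOn.integral_mul_le_inv_integral_inv
    {f g : ℝ → ℝ} {m z : ℝ → ℝ → ℝ} {a t K F : ℝ}
    (hm : IsDominatedAdjointSolutionOn f g m (Ico a t))
    (hm_pos : ∀ s ∈ Ico a t, 0 < ∫ x, m s x)
    (hz : IsNonnegSupersolutionOn (reaction f) z (Ico a t)) (hzK : ∀ s ∈ Ico a t, ∀ x, z s x ≤ K)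
    (hfF : ∀ x, |f x| ≤ F) (hat : a < t) :
    ∫ x, m a x * z a x ≤ (∫ s in a..t, (∫ x, m s x)⁻¹)⁻¹ := by
  refine le_inv_integral_of_forall_mul_le_one hat
    (hm.continuousOn_integral.inv₀ fun s hs => (hm_pos s hs).ne')
    (fun s hs => inv_pos.2 (hm_pos s hs)) fun b hb => ?_
  have hsub : Icc a b ⊆ Ico a t := Icc_subset_Ico_right hb.2
  exact (hm.mono hsub).integral_mul_mul_integral_inv_le_one (fun s hs => hm_pos s (hsub hs))
    (hz.mono hsub) (fun s hs => hzK s (hsub hs)) hfF hb.1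

theorem isDominatedAdjointSolutionOn_reverse {f g : ℝ → ℝ} {w : ℝ → ℝ → ℝ} {t : ℝ}
    (hw_eq : ∀ s ∈ Ioc 0 t, ∀ x,
      HasDerivAt (fun τ => w τ x) (deriv (deriv (w s)) x - 2 * f x * w s x) s)
    (hw_reg : ∀ s ∈ Ioc 0 t, ContDiff ℝ 2 (w s)) (hw_nonneg : ∀ s ∈ Ioc 0 t, ∀ x, 0 ≤ w s x)
    (hw_decay : ∀ s ∈ Ioc 0 t, Tendsto (deriv (w s)) (cocompact ℝ) (𝓝 0)) (hg : Integrable g)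
    (hw_dom : ∀ s ∈ Ioc 0 t, ∀ x, |w s x| ≤ g x ∧ |deriv (fun τ => w τ x) s| ≤ g x) :
    IsDominatedAdjointSolutionOn f g (fun s => w (t - s)) (Ico 0 t) := by
  have hmem : ∀ s ∈ Ico 0 t, t - s ∈ Ioc 0 t := fun s hs =>
    ⟨sub_pos.2 hs.2, sub_le_self t hs.1⟩
  exact
    { integrable_bound := hg
      nonneg := fun s hs => hw_nonneg _ (hmem s hs)
      contDiff := fun s hs => hw_reg _ (hmem s hs)
      hasDerivAt := fun s hs x => by
        simpa only [neg_sub] using (hw_eq _ (hmem s hs) x).comp_const_sub t s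
      le_bound := fun s hs x => (le_abs_self _).trans (hw_dom _ (hmem s hs) x).1
      abs_deriv_le := fun s hs x => by
        rw [deriv_comp_const_sub (f := fun τ => w τ x), abs_neg]
        exact (hw_dom _ (hmem s hs) x).2
      tendsto_deriv := fun s hs => hw_decay _ (hmem s hs) }

theorem integrable_and_integral_le_of_tendsto {X : Type*} [MeasurableSpace X] {μ : Measure X}
    {G : ℕ → X → ℝ} {φ : X → ℝ} {C : ℝ}
    (hlim : ∀ᵐ x ∂μ, Tendsto (fun n => G n x) atTop (𝓝 (φ x)))
    (hG : ∀ n, Integrable (G n) μ) (hG_nonneg : ∀ n, 0 ≤ᵐ[μ] G n)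
    (hGC : ∀ n, ∫ x, G n x ∂μ ≤ C) : Integrable φ μ ∧ ∫ x, φ x ∂μ ≤ C := by
  have hC : 0 ≤ C := (integral_nonneg_of_ae (hG_nonneg 0)).trans (hGC 0)
  have hle : ∀ n, eLpNorm (G n) 1 μ ≤ ENNReal.ofReal C := fun n => by
    rw [eLpNorm_one_eq_lintegral_enorm, ← ofReal_integral_norm_eq_lintegral_enorm (hG n),
      integral_congr_ae ((hG_nonneg n).mono fun x hx => Real.norm_of_nonneg hx)]
    exact ENNReal.ofReal_le_ofReal (hGC n)
  have hφC : eLpNorm φ 1 μ ≤ ENNReal.ofReal C :=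
    Lp.eLpNorm_le_of_ae_tendsto (Eventually.of_forall hle)
      (fun n => (hG n).aestronglyMeasurable) hlim
  have hφ : Integrable φ μ := memLp_one_iff_integrable.1
    ⟨aestronglyMeasurable_of_tendsto_ae _ (fun n => (hG n).aestronglyMeasurable) hlim,
      hφC.trans_lt ENNReal.ofReal_lt_top⟩
  refine ⟨hφ, (integral_mono hφ hφ.norm fun x => Real.le_norm_self _).trans
    ((ENNReal.ofReal_le_ofReal_iff hC).1 ?_)⟩
  rwa [ofReal_integral_norm_eq_lintegral_enorm hφ, ← eLpNorm_one_eq_lintegral_enorm]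

theorem exists_forall_le_of_tendsto_cocompact_zero {X : Type*} [TopologicalSpace X] {f : X → ℝ}
    (hf : Continuous f) (hlim : Tendsto f (cocompact X) (𝓝 0)) : ∃ F, ∀ x, f x ≤ F := by
  obtain ⟨F, hF⟩ := (ZeroAtInftyContinuousMap.isBounded_range
    (⟨⟨f, hf⟩, hlim⟩ : ZeroAtInftyContinuousMap X ℝ)).bddAbove
  exact ⟨F, fun x => hF ⟨x, rfl⟩⟩

theorem IsDominatedAdjointSolutionOn.integrable_mul_and_integral_mul_le
    {f g : ℝ → ℝ} {m y : ℝ → ℝ → ℝ} {a t F : ℝ}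
    (hm : IsDominatedAdjointSolutionOn f g m (Ico a t))
    (hm_pos : ∀ s ∈ Ico a t, 0 < ∫ x, m s x)
    (hy : IsNonnegSupersolutionOn (reaction f) y (Ico a t))
    (hf_nonneg : ∀ x, 0 ≤ f x) (hfF : ∀ x, f x ≤ F) (hat : a < t) :
    Integrable (fun x => m a x * y a x) ∧
      ∫ x, m a x * y a x ≤ (∫ s in a..t, (∫ x, m s x)⁻¹)⁻¹ := by
  have ha : a ∈ Ico a t := left_mem_Ico.2 hat
  let ε : ℕ → ℝ := fun n => 1 / ((n : ℝ) + 1)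
  have hε : ∀ n, 0 < ε n := fun n => Nat.one_div_pos_of_nat
  have hz : ∀ n, IsNonnegSupersolutionOn (reaction f) (fun s x => saturate (ε n) (y s x))
      (Ico a t) := fun n => hy.saturate_comp hf_nonneg (hε n).le
  have hzK : ∀ n, ∀ s ∈ Ico a t, ∀ x, saturate (ε n) (y s x) ≤ (ε n)⁻¹ := fun n s hs x =>
    saturate_le_inv (hε n) (hy.nonneg s hs x)
  refine integrable_and_integral_le_of_tendsto
    (G := fun n x => m a x * saturate (ε n) (y a x))
    (ae_of_all _ fun x => ((tendsto_saturate _).comp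
      tendsto_one_div_add_atTop_nhds_zero_nat).const_mul _)
    (fun n => hm.integrable_mul ha ((hz n).contDiff a ha).continuous fun x =>
      (abs_of_nonneg ((hz n).nonneg a ha x)).trans_le (hzK n a ha x))
    (fun n => ae_of_all _ fun x => mul_nonneg (hm.nonneg a ha x) ((hz n).nonneg a ha x))
    fun n => hm.integral_mul_le_inv_integral_inv hm_pos (hz n) (hzK n)
      (fun x => (abs_of_nonneg (hf_nonneg x)).trans_le (hfF x)) hat

theorem fence_inequality_general {f : ℝ → ℝ} (hf_nonneg : ∀ x, 0 ≤ f x)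
    (hf_bdd : ∃ F, ∀ x, f x ≤ F) {t : ℝ} (ht : 0 < t) {u : ℝ → ℝ → ℝ}
    (hu_eq : ∀ s ∈ Ico 0 t, ∀ x, HasDerivAt (fun τ => u τ x)
      (deriv (deriv (u s)) x - 2 * f x * u s x - u s x ^ 2) s)
    (hu_reg : ∀ s ∈ Ico 0 t, ContDiff ℝ 2 (u s)) (hu_nonpos : ∀ s ∈ Ico 0 t, ∀ x, u s x ≤ 0)
    {w : ℝ → ℝ → ℝ}
    (hw_eq : ∀ s ∈ Ioc 0 t, ∀ x,
      HasDerivAt (fun τ => w τ x) (deriv (deriv (w s)) x - 2 * f x * w s x) s)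
    (hw_reg : ∀ s ∈ Ioc 0 t, ContDiff ℝ 2 (w s)) (hw_nonneg : ∀ s ∈ Ioc 0 t, ∀ x, 0 ≤ w s x)
    (hw_decay : ∀ s ∈ Ioc 0 t, Tendsto (deriv (w s)) (cocompact ℝ) (𝓝 0))
    (hw_pos : ∀ s ∈ Ioc 0 t, 0 < ∫ x, |w s x|)
    (hw_unif : ∃ g : ℝ → ℝ, Integrable g ∧ ∀ s ∈ Ioc 0 t, ∀ x,
      |w s x| ≤ g x ∧ |deriv (fun τ => w τ x) s| ≤ g x) :
    Integrable (fun x => w t x * u 0 x) ∧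
      -(∫ x, w t x * u 0 x) ≤ (∫ s in 0..t, 1 / ∫ x, |w s x|)⁻¹ := by
  obtain ⟨F, hF⟩ := hf_bdd
  obtain ⟨g, hg, hw_dom⟩ := hw_unif
  have hmass : ∀ s ∈ Ioc 0 t, ∫ x, |w s x| = ∫ x, w s x := fun s hs =>
    integral_congr_ae (ae_of_all _ fun x => abs_of_nonneg (hw_nonneg s hs x))
  have hmass_integral : ∫ s in 0..t, 1 / ∫ x, |w s x| = ∫ s in 0..t, (∫ x, w (t - s) x)⁻¹ := by
    rw [intervalIntegral.integral_comp_sub_left (fun s => (∫ x, w s x)⁻¹), sub_self, sub_zero]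
    refine intervalIntegral.integral_congr_ae (ae_of_all _ fun s hs => ?_)
    rw [one_div, hmass s (uIoc_of_le ht.le ▸ hs)]
  obtain ⟨hint, hle⟩ := (isDominatedAdjointSolutionOn_reverse hw_eq hw_reg hw_nonneg hw_decay hg
    hw_dom).integrable_mul_and_integral_mul_le
    (fun s hs => have hts : t - s ∈ Ioc 0 t := ⟨sub_pos.2 hs.2, sub_le_self t hs.1⟩
      hmass _ hts ▸ hw_pos _ hts)
    (isNonnegSupersolutionOn_neg hu_reg hu_nonpos hu_eq) hf_nonneg hF ht
  rw [hmass_integral]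
  simp only [sub_zero, mul_neg, integral_neg] at hint hle
  exact ⟨integrable_neg_iff.1 hint, hle⟩

end

/-- Lemma (main fence inequality): for a nonpositive bounded classical solution `u` of
`∂u/∂t = ∂²u/∂x² − 2 f u − u²` with `u(0,·) = h`, and a solution `w` of the linearized
equation `∂w/∂t = ∂²w/∂x² − 2 f w` with nonnegative integrable initial datum and the
regularity/decay from parabolic theory, for every `t ∈ (0,T)`:
`−∫ w(t,x) h(x) dx ≤ (∫₀ᵗ 1/‖w(s,·)‖_{L¹} ds)⁻¹`. -/
theorem fence_inequality
    (f : ℝ → ℝ) (hf_smooth : ContDiff ℝ (⊤ : ℕ∞) f) (hf_pos : ∀ x, 0 < f x)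
    (hf_decay : Tendsto f (cocompact ℝ) (nhds 0))
    (hf_d1 : ∃ M : ℝ, ∀ x, |deriv f x| ≤ M)
    (hf_d2 : ∃ M : ℝ, ∀ x, |deriv (deriv f) x| ≤ M)
    (T : ℝ) (hT : 0 < T) (h : ℝ → ℝ)
    (u : ℝ → ℝ → ℝ)
    (hu0 : ∀ x, u 0 x = h x)
    (hu_eq : ∀ s ∈ Set.Ico (0 : ℝ) T, ∀ x : ℝ,
      HasDerivAt (fun τ => u τ x)
        (deriv (deriv (u s)) x - 2 * f x * u s x - (u s x) ^ 2) s)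
    (hu_reg : ∀ s ∈ Set.Ico (0 : ℝ) T, ContDiff ℝ 2 (u s))
    (hu_cont : ∀ x, ContinuousOn (fun s => u s x) (Set.Ico (0 : ℝ) T))
    (hu_nonpos : ∀ s ∈ Set.Ico (0 : ℝ) T, ∀ x, u s x ≤ 0)
    (hu_bdd : ∀ s ∈ Set.Ico (0 : ℝ) T, ∃ M : ℝ, ∀ x, |u s x| ≤ M)
    (w : ℝ → ℝ → ℝ) (w₀ : ℝ → ℝ)
    (hw0 : ∀ x, w 0 x = w₀ x)
    (hw0_nonneg : ∀ x, 0 ≤ w₀ x) (hw0_int : Integrable w₀)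
    (hw_eq : ∀ s : ℝ, 0 < s → ∀ x : ℝ,
      HasDerivAt (fun τ => w τ x)
        (deriv (deriv (w s)) x - 2 * f x * w s x) s)
    (hw_reg : ∀ s : ℝ, 0 ≤ s → ContDiff ℝ 2 (w s))
    (hw_nonneg : ∀ s : ℝ, 0 ≤ s → ∀ x, 0 ≤ w s x)
    (hw_int : ∀ s : ℝ, 0 ≤ s → Integrable (w s) ∧ Integrable (deriv (w s)))
    (hw_decay : ∀ s : ℝ, 0 ≤ s →
      Tendsto (w s) (cocompact ℝ) (nhds 0) ∧
        Tendsto (deriv (w s)) (cocompact ℝ) (nhds 0))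
    (hw_pos : ∀ s : ℝ, 0 ≤ s → 0 < ∫ x, |w s x|)
    (hw_unif : ∀ t₀ : ℝ, 0 ≤ t₀ → ∃ g : ℝ → ℝ, Integrable g ∧
      ∀ s ∈ Set.Icc (0 : ℝ) t₀, ∀ x,
        |w s x| ≤ g x ∧ |deriv (fun τ => w τ x) s| ≤ g x) :
    ∀ t ∈ Set.Ioo (0 : ℝ) T,
      -(∫ x, w t x * h x) ≤ (∫ s in (0 : ℝ)..t, 1 / ∫ x, |w s x|)⁻¹ := by
  intro t ht
  obtain rfl : u 0 = h := funext hu0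
  have hIco : Set.Ico 0 t ⊆ Set.Ico 0 T := Set.Ico_subset_Ico_right ht.2.le
  obtain ⟨g, hg, hw_dom⟩ := hw_unif t ht.1.le
  exact (fence_inequality_general (fun x => (hf_pos x).le)
    (exists_forall_le_of_tendsto_cocompact_zero hf_smooth.continuous hf_decay) ht.1
    (fun s hs => hu_eq s (hIco hs)) (fun s hs => hu_reg s (hIco hs))
    (fun s hs => hu_nonpos s (hIco hs)) (fun s hs => hw_eq s hs.1)
    (fun s hs => hw_reg s hs.1.le) (fun s hs => hw_nonneg s hs.1.le)
    (fun s hs => (hw_decay s hs.1.le).2) (fun s hs => hw_pos s hs.1.le)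
    ⟨g, hg, fun s hs => hw_dom s (Set.Ioc_subset_Icc_self hs)⟩).2
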